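/- arXiv:1908.00241 — 10 statements merged into one kernel-verified Lean document; each statement's English description precedes it below -/
import Mathlib

section
/- Let n ≥ 1, let A, B ⊆ ℤⁿ be nonempty finite sets with coefficient functions v : A → ℝ and u : B → ℝ, and let f(x) = max_{a∈A}(v(a) + ⟨a,x⟩) and g(x) = max_{b∈B}(u(b) + ⟨b,x⟩) be the associated tropical polynomial functions on ℝⁿ. Then there exists a tropical polynomial function h, i.e. a nonempty finite set C ⊆ ℤⁿ and a function w : C → ℝ with h(x) = max_{c∈C}(w(c) + ⟨c,x⟩), such that f(x) = g(x) + h(x) for all x ∈ ℝⁿ, if and only if the function x ↦ f(x) − g(x) is convex on ℝⁿ. -/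
/-!
A tropical polynomial is a maximum of affine functions, hence convex. Conversely, `f - g` agrees at
every point with one of finitely many affine functions, the differences of a term of `f` and a term
of `g`. At a point `z` where distinct members of this family take distinct values, `f - g` agrees
with a single member along a short piece of every line through `z`, so by convexity that member is
a global minorant of `f - g`. Every point is a limit of such `z` along a line, and convex functions
are continuous on lines, so at every point some member that is a minorant is attained: `f - g` is
the maximum of these members.
-/

open AffineMap Filter Set Topology

section Separation

variable {𝕜 E : Type*} [Field 𝕜] [Infinite 𝕜] [AddCommGroup E] [Module 𝕜 E]

theorem exists_injOn_dual_apply (S : Finset (Module.Dual 𝕜 E)) :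
    ∃ d : E, InjOn (fun ℓ : Module.Dual 𝕜 E => ℓ d) S := by
  obtain ⟨d, hd⟩ := Module.Dual.exists_forall_ne_zero_of_forall_exists
    (fun p : {p : S × S // p.1 ≠ p.2} => (p.1.1 - p.1.2 : Module.Dual 𝕜 E)) fun p =>
      DFunLike.ne_iff.1 (sub_ne_zero.2 (Subtype.coe_ne_coe.2 p.2))
  refine ⟨d, fun ℓ hℓ m hm heq => by_contra fun hne => ?_⟩
  exact hd ⟨(⟨ℓ, hℓ⟩, ⟨m, hm⟩), fun h => hne (congrArg Subtype.val h)⟩ (sub_eq_zero.2 heq)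

theorem exists_eventually_injOn_lineMap (T : Finset (E →ᵃ[𝕜] 𝕜)) (x : E) :
    ∃ y, ∀ᶠ t : 𝕜 in cofinite, InjOn (fun ψ : E →ᵃ[𝕜] 𝕜 => ψ (lineMap x y t)) T := by
  classical
  obtain ⟨d, hd⟩ := exists_injOn_dual_apply (T.image AffineMap.linear)
  have hline (ψ : E →ᵃ[𝕜] 𝕜) (t : 𝕜) : ψ (lineMap x (d + x) t) = t * ψ.linear d + ψ x := by
    simpa [lineMap_apply] using ψ.map_vadd x (t • d)
  refine ⟨d + x, (eventually_all_finset T).2 fun ψ hψ => (eventually_all_finset T).2 fun χ hχ => ?_⟩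
  obtain rfl | hne := eq_or_ne ψ χ
  · exact .of_forall fun _ _ => rfl
  have hsub : {t : 𝕜 | ψ (lineMap x (d + x) t) = χ (lineMap x (d + x) t)}.Subsingleton := by
    intro s hs t ht
    simp only [mem_ofPred_eq, hline] at hs ht
    by_contra hst
    have hslope : ψ.linear d = χ.linear d :=
      mul_left_cancel₀ (sub_ne_zero.2 hst) (by linear_combination hs - ht)
    have hlin : ψ.linear = χ.linear :=
      hd (Finset.mem_image_of_mem _ hψ) (Finset.mem_image_of_mem _ hχ) hslope
    exact hne (AffineMap.ext_linear hlin (p := x) (by linear_combination hs - s * hslope))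
  filter_upwards [hsub.finite.compl_mem_cofinite] with t ht heq
  exact absurd heq ht

end Separation

section ConvexSelection

variable {E : Type*} [AddCommGroup E] [Module ℝ E] {h : E → ℝ}

theorem eventually_lineMap_ne_of_convexOn (hh : ConvexOn ℝ univ h) {ψ : E →ᵃ[ℝ] ℝ} {x : E}
    (hx : h x ≠ ψ x) (y : E) : ∀ᶠ t in 𝓝 (0 : ℝ), h (lineMap x y t) ≠ ψ (lineMap x y t) := by
  have hcont : Continuous (h ∘ lineMap (k := ℝ) x y) :=
    (hh.comp_affineMap (lineMap x y)).locallyLipschitz.continuous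
  have hψ : Continuous fun t : ℝ => ψ (lineMap x y t) := by
    simp only [apply_lineMap]
    exact lineMap_continuous
  exact (hcont.continuousAt.ne_iff_eventually_ne hψ.continuousAt).1 (by simpa using hx)

theorem affineMap_le_of_convexOn_of_eventually_lineMap_eq (hh : ConvexOn ℝ univ h)
    {ψ : E →ᵃ[ℝ] ℝ} {x y : E}
    (hψ : ∀ᶠ t in 𝓝 (0 : ℝ), h (lineMap x y t) = ψ (lineMap x y t)) : ψ y ≤ h y := by
  let F (t : ℝ) : ℝ := h (lineMap x y t) - ψ (lineMap x y t)
  have hconv : ConvexOn ℝ univ F :=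
    (hh.comp_affineMap (lineMap x y)).sub
      ((concaveOn_id convex_univ).comp_affineMap (ψ.comp (lineMap x y)))
  have hzero : ∀ᶠ t in 𝓝 (0 : ℝ), F t = 0 := hψ.mono fun t => sub_eq_zero.2
  have hmin : IsLocalMin F 0 := hzero.mono fun t ht => by rw [ht, hzero.self_of_nhds]
  have hle : F 0 ≤ F 1 := IsMinOn.of_isLocalMin_of_convex_univ hmin hconv 1
  rw [hzero.self_of_nhds] at hle
  simpa [F] using hle

theorem affineMap_le_of_convexOn_of_injOn (hh : ConvexOn ℝ univ h) {T : Finset (E →ᵃ[ℝ] ℝ)}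
    (hT : ∀ x, ∃ ψ ∈ T, h x = ψ x) {z : E} (hz : InjOn (fun ψ : E →ᵃ[ℝ] ℝ => ψ z) T)
    {ψ : E →ᵃ[ℝ] ℝ} (hψ : ψ ∈ T) (hψz : h z = ψ z) (y : E) : ψ y ≤ h y := by
  have hunique : ∀ᶠ t in 𝓝 (0 : ℝ), ∀ χ ∈ T, h (lineMap z y t) = χ (lineMap z y t) → χ = ψ := by
    refine (eventually_all_finset T).2 fun χ hχ => ?_
    obtain rfl | hne := eq_or_ne χ ψ
    · exact .of_forall fun _ _ => rfl
    have hχz : h z ≠ χ z := fun heq => hne (hz hχ hψ (heq.symm.trans hψz))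
    filter_upwards [eventually_lineMap_ne_of_convexOn hh hχz y] with t ht heq
    exact absurd heq ht
  refine affineMap_le_of_convexOn_of_eventually_lineMap_eq hh (x := z) ?_
  filter_upwards [hunique] with t ht
  obtain ⟨χ, hχ, hχt⟩ := hT (lineMap z y t)
  rwa [ht χ hχ hχt] at hχt

theorem exists_affineMap_le_and_eq_of_convexOn (hh : ConvexOn ℝ univ h) {T : Finset (E →ᵃ[ℝ] ℝ)}
    (hT : ∀ x, ∃ ψ ∈ T, h x = ψ x) (x : E) : ∃ ψ ∈ T, (∀ y, ψ y ≤ h y) ∧ h x = ψ x := by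
  obtain ⟨y, hy⟩ := exists_eventually_injOn_lineMap T x
  by_contra! hx
  have hne : ∀ᶠ t in 𝓝 (0 : ℝ), ∀ ψ ∈ T, (∀ y, ψ y ≤ h y) →
      h (lineMap x y t) ≠ ψ (lineMap x y t) := by
    refine (eventually_all_finset T).2 fun ψ hψ => eventually_imp_distrib_left.2 fun hle => ?_
    exact eventually_lineMap_ne_of_convexOn hh (hx ψ hψ hle) y
  obtain ⟨t, hinj, ht⟩ := ((hy.filter_mono (nhdsNE_le_cofinite 0)).and
    (hne.filter_mono nhdsWithin_le_nhds)).exists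
  obtain ⟨ψ, hψ, hψt⟩ := hT (lineMap x y t)
  exact ht ψ hψ (affineMap_le_of_convexOn_of_injOn hh hT hinj hψ hψt) hψt

end ConvexSelection

theorem exists_sup'_image_add_eq {κ G α : Type*} [DecidableEq G] [LinearOrder α] [Add α]
    [AddRightMono α] {s : Finset κ} (hs : s.Nonempty) (c : κ → G) (k : κ → α) :
    ∃ w : G → α, ∀ F : G → α,
      s.sup' hs (fun i => k i + F (c i)) = (s.image c).sup' (hs.image c) fun a => w a + F a := by
  have hmax : ∀ a ∈ s.image c, ∃ i ∈ s, c i = a ∧ ∀ j ∈ s, c j = a → k j ≤ k i := by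
    intro a ha
    obtain ⟨i, hi, hia⟩ := Finset.mem_image.1 ha
    obtain ⟨m, hm, hle⟩ := (s.filter (c · = a)).exists_max_image k ⟨i, by simp [hi, hia]⟩
    simp only [Finset.mem_filter, and_imp] at hm hle
    exact ⟨m, hm.1, hm.2, hle⟩
  have : Nonempty κ := hs.to_type
  -- When several `i` share the value `c i = a`, only the largest of the `k i` matters.
  choose! m hms hmc hmk using hmax
  refine ⟨fun a => k (m a), fun F => le_antisymm (Finset.sup'_le _ _ fun i hi => ?_)
    (Finset.sup'_le _ _ fun a ha => ?_)⟩
  · have hci : c i ∈ s.image c := Finset.mem_image_of_mem c hi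
    calc k i + F (c i) ≤ k (m (c i)) + F (c i) := by gcongr; exact hmk _ hci i hi rfl
      _ ≤ _ := Finset.le_sup' (fun a => k (m a) + F a) hci
  · calc k (m a) + F a = k (m a) + F (c (m a)) := by rw [hmc a ha]
      _ ≤ _ := Finset.le_sup' (fun i => k i + F (c i)) (hms a ha)

section TropicalPolynomial

variable {G E : Type*} [AddCommGroup E] [Module ℝ E]

/-- The tropical polynomial function on `E` with exponents `C` and coefficients `w`, where an
exponent `c` pairs with points of `E` through the linear functional `φ c`. Tropical polynomial
functions on `ℝⁿ` are the case `G = ℤⁿ`, `φ = intPairing`. Only the values of `w` on `C` matter. -/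
def tropicalPolynomial (φ : G → Module.Dual ℝ E) (C : Finset G) (hC : C.Nonempty) (w : G → ℝ)
    (x : E) : ℝ :=
  C.sup' hC fun c => w c + φ c x

/-- The pairing `⟨a, x⟩ = ∑ i, aᵢ xᵢ` of integer exponents with real points, as an additive
homomorphism from exponents to linear functionals. -/
def intPairing (ι : Type*) [Fintype ι] : (ι → ℤ) →+ Module.Dual ℝ (ι → ℝ) :=
  (dotProductBilin ℝ ℝ).toAddMonoidHom.comp ((Int.castAddHom ℝ).compLeft ι)

theorem convexOn_tropicalPolynomial (φ : G → Module.Dual ℝ E) {C : Finset G} (hC : C.Nonempty)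
    (w : G → ℝ) : ConvexOn ℝ univ (tropicalPolynomial φ C hC w) := by
  have hsup : tropicalPolynomial φ C hC w = C.sup' hC fun c x => w c + φ c x := by
    ext x
    simp only [tropicalPolynomial, Finset.sup'_apply]
  rw [hsup]
  exact Finset.sup'_induction hC _ (fun _ hf _ hg => hf.sup hg) fun c _ =>
    (convexOn_const (w c) convex_univ).add ((φ c).convexOn convex_univ)

theorem exists_eq_tropicalPolynomial_of_convexOn {κ : Type*} (φ : G → Module.Dual ℝ E) {h : E → ℝ}
    (hh : ConvexOn ℝ univ h) (s : Finset κ) (c : κ → G) (k : κ → ℝ)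
    (hs : ∀ x, ∃ i ∈ s, h x = k i + φ (c i) x) :
    ∃ (C : Finset G) (hC : C.Nonempty) (w : G → ℝ), h = tropicalPolynomial φ C hC w := by
  classical
  let ψ (i : κ) : E →ᵃ[ℝ] ℝ := const ℝ E (k i) + (φ (c i)).toAffineMap
  let S : Finset κ := s.filter fun i => ∀ y, ψ i y ≤ h y
  have hattained (x : E) : ∃ i ∈ S, h x = ψ i x := by
    obtain ⟨_, hi, hle, heq⟩ := exists_affineMap_le_and_eq_of_convexOn hh (T := s.image ψ)
      (by simpa [ψ] using hs) x
    obtain ⟨i, his, rfl⟩ := Finset.mem_image.1 hi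
    exact ⟨i, Finset.mem_filter.2 ⟨his, hle⟩, heq⟩
  have hS : S.Nonempty := (hattained 0).imp fun _ hi => hi.1
  have hsup (x : E) : h x = S.sup' hS fun i => ψ i x := by
    obtain ⟨i, hi, heq⟩ := hattained x
    exact le_antisymm (heq.trans_le (Finset.le_sup' (fun i => ψ i x) hi))
      (Finset.sup'_le _ _ fun j hj => (Finset.mem_filter.1 hj).2 x)
  obtain ⟨w, hw⟩ := exists_sup'_image_add_eq hS c k
  exact ⟨S.image c, hS.image c, w, funext fun x => (hsup x).trans (hw fun a => φ a x)⟩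

theorem exists_tropicalPolynomial_sub_eq [AddGroup G] (φ : G →+ Module.Dual ℝ E) {A B : Finset G}
    (hA : A.Nonempty) (hB : B.Nonempty) (v u : G → ℝ) (x : E) :
    ∃ p ∈ A ×ˢ B, tropicalPolynomial φ A hA v x - tropicalPolynomial φ B hB u x =
      v p.1 - u p.2 + φ (p.1 - p.2) x := by
  obtain ⟨a, ha, hfa⟩ := A.exists_mem_eq_sup' hA fun a => v a + φ a x
  obtain ⟨b, hb, hgb⟩ := B.exists_mem_eq_sup' hB fun b => u b + φ b x
  refine ⟨(a, b), Finset.mk_mem_product ha hb, ?_⟩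
  simp only [tropicalPolynomial, hfa, hgb, map_sub, LinearMap.sub_apply]
  ring

theorem tropical_division_iff_convex_general [AddGroup G] (φ : G →+ Module.Dual ℝ E)
    {A B : Finset G} (hA : A.Nonempty) (hB : B.Nonempty) (v u : G → ℝ) :
    (∃ (C : Finset G) (hC : C.Nonempty) (w : G → ℝ), tropicalPolynomial φ A hA v =
        tropicalPolynomial φ B hB u + tropicalPolynomial φ C hC w) ↔
      ConvexOn ℝ univ (tropicalPolynomial φ A hA v - tropicalPolynomial φ B hB u) := by
  simp only [← sub_eq_iff_eq_add']
  constructor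
  · rintro ⟨C, hC, w, hfg⟩
    exact hfg ▸ convexOn_tropicalPolynomial φ hC w
  · intro hconv
    exact exists_eq_tropicalPolynomial_of_convexOn φ hconv (A ×ˢ B) (fun p => p.1 - p.2)
      (fun p => v p.1 - u p.2) (exists_tropicalPolynomial_sub_eq φ hA hB v u)

end TropicalPolynomial

/-- The tropical division problem `f = g ⊙ h` has a solution `h`
(a tropical polynomial function) if and only if `f - g` is convex on ℝⁿ. -/
theorem tropical_division_iff_convex (n : ℕ) (hn : 1 ≤ n)
    (A B : Finset (Fin n → ℤ)) (hA : A.Nonempty) (hB : B.Nonempty)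
    (v u : (Fin n → ℤ) → ℝ)
    (f g : (Fin n → ℝ) → ℝ)
    (hf : ∀ x, f x = A.sup' hA (fun a => v a + ∑ i, (a i : ℝ) * x i))
    (hg : ∀ x, g x = B.sup' hB (fun b => u b + ∑ i, (b i : ℝ) * x i)) :
    (∃ (C : Finset (Fin n → ℤ)) (hC : C.Nonempty) (w : (Fin n → ℤ) → ℝ),
        ∀ x, f x = g x + C.sup' hC (fun c => w c + ∑ i, (c i : ℝ) * x i)) ↔
    ConvexOn ℝ Set.univ (fun x => f x - g x) := by
  obtain rfl : f = tropicalPolynomial (intPairing (Fin n)) A hA v := funext hf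
  obtain rfl : g = tropicalPolynomial (intPairing (Fin n)) B hB u := funext hg
  simpa only [funext_iff] using! tropical_division_iff_convex_general (intPairing (Fin n)) hA hB v u
end

section
/- Let n ≥ 1 and let g, h : ℝⁿ → ℝ be convex functions. Then the set of points where g + h fails to be differentiable equals the union of the set of points where g fails to be differentiable and the set of points where h fails to be differentiable; that is, {x ∈ ℝⁿ : g + h is not differentiable at x} = {x : g is not differentiable at x} ∪ {x : h is not differentiable at x}. -/
/-!
A convex function that is continuous at an interior point `x` of its domain has a subgradient at
`x`: the slope of a non-vertical hyperplane supporting its epigraph. Let `l` and `m` be subgradients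
of `g` and `h` at `x`. If `g + h` is differentiable at `x`, its derivative must be the subgradient
`l + m`. Then `g` is squeezed between `y ↦ g x + l (y - x)` and `y ↦ g y + h y - (h x + m (y - x))`,
which agree at `x` and both have derivative `l` there.
-/

open Filter Set Topology

section Epigraph

variable {X β : Type*} [TopologicalSpace X] [TopologicalSpace β] [LinearOrder β] {s : Set X}
  {g : X → β} {x : X}

theorem mem_interior_epigraph [OrderClosedTopology β] (hs : s ∈ 𝓝 x) (hg : ContinuousAt g x)
    {t : β} (ht : g x < t) :
    (x, t) ∈ interior {p : X × β | p.1 ∈ s ∧ g p.1 ≤ p.2} := by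
  have hmem : ∀ᶠ p : X × β in 𝓝 (x, t), p.1 ∈ s := continuousAt_fst hs
  have hlt : ∀ᶠ p : X × β in 𝓝 (x, t), g p.1 < p.2 :=
    (hg.comp' continuousAt_fst).eventually_lt continuousAt_snd ht
  exact mem_interior_iff_mem_nhds.2 (hmem.and (hlt.mono fun _ => le_of_lt))

theorem notMem_interior_epigraph [OrderTopology β] [DenselyOrdered β] [NoMinOrder β] :
    (x, g x) ∉ interior {p : X × β | p.1 ∈ s ∧ g p.1 ≤ p.2} := by
  intro hx
  have hvert : ∀ᶠ t in 𝓝 (g x), x ∈ s ∧ g x ≤ t :=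
    (Continuous.prodMk_right x).continuousAt (mem_interior_iff_mem_nhds.1 hx)
  have hIci : g x ∈ interior (Ici (g x)) :=
    mem_interior_iff_mem_nhds.2 (hvert.mono fun _ => And.right)
  simp at hIci

end Epigraph

section TopologicalVectorSpace

variable {E : Type*} [AddCommGroup E] [Module ℝ E] [TopologicalSpace E]

/-- `l` is a subgradient of `g` at `x` relative to `s`: the affine function of slope `l` that agrees
with `g` at `x` bounds `g` from below on `s`. The point `x` itself need not lie in `s`. -/
def IsSubgradientOn (g : E → ℝ) (s : Set E) (x : E) (l : E →L[ℝ] ℝ) : Prop :=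
  ∀ y ∈ s, g x + l (y - x) ≤ g y

theorem IsSubgradientOn.add {g h : E → ℝ} {s : Set E} {x : E}
    {l m : E →L[ℝ] ℝ} (hl : IsSubgradientOn g s x l) (hm : IsSubgradientOn h s x m) :
    IsSubgradientOn (fun y => g y + h y) s x (l + m) := by
  intro y hy
  calc g x + h x + (l + m) (y - x) = (g x + l (y - x)) + (h x + m (y - x)) := by
        rw [add_apply]; ring
    _ ≤ g y + h y := add_le_add (hl y hy) (hm y hy)

theorem lt_of_mem_interior_of_forall_le [ContinuousAdd E] [ContinuousSMul ℝ E] {f : E →L[ℝ] ℝ}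
    (hf : f ≠ 0) {A : Set E} {c : ℝ} (hA : ∀ a ∈ A, f a ≤ c) {a : E} (ha : a ∈ interior A) :
    f a < c := by
  have himage : f '' interior A ⊆ interior (Iic c) :=
    (f.isOpenMap_of_ne_zero hf).image_interior_subset A |>.trans
      (interior_mono (image_subset_iff.2 hA))
  simpa using himage (mem_image_of_mem f ha)

variable [IsTopologicalAddGroup E] [ContinuousSMul ℝ E] {g : E → ℝ} {s : Set E} {x : E}

theorem exists_nonvertical_support_epigraph (hg : ConvexOn ℝ s g) (hs : s ∈ 𝓝 x)
    (hgc : ContinuousAt g x) :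
    ∃ F : E × ℝ →L[ℝ] ℝ, F (0, 1) < 0 ∧ ∀ y ∈ s, F (y, g y) ≤ F (x, g x) := by
  have habove := mem_interior_epigraph hs hgc (lt_add_one (g x))
  obtain ⟨F, hF, hsupp⟩ := geometric_hahn_banach_of_nonempty_interior_point hg.convex_epigraph
    notMem_interior_epigraph ⟨_, habove⟩
  refine ⟨F, ?_, fun y hy => hsupp (y, g y) ⟨hy, le_rfl⟩⟩
  calc F (0, 1) = F (x, g x + 1) - F (x, g x) := by rw [← map_sub]; simp
    _ < 0 := sub_neg.2 (lt_of_mem_interior_of_forall_le hF hsupp habove)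

theorem exists_isSubgradientOn (hg : ConvexOn ℝ s g) (hs : s ∈ 𝓝 x) (hgc : ContinuousAt g x) :
    ∃ l : E →L[ℝ] ℝ, IsSubgradientOn g s x l := by
  obtain ⟨F, hneg, hsupp⟩ := exists_nonvertical_support_epigraph hg hs hgc
  refine ⟨(-F (0, 1))⁻¹ • F.comp (ContinuousLinearMap.inl ℝ E ℝ), fun y hy => ?_⟩
  have hsplit : F (y - x, 0) = F (y, g y) - F (x, g x) + -F (0, 1) * (g y - g x) := by
    rw [neg_mul, mul_comm, ← smul_eq_mul, ← map_smul, ← map_sub, ← sub_eq_add_neg, ← map_sub]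
    simp
  have hslope : (-F (0, 1))⁻¹ * F (y - x, 0) ≤ g y - g x := by
    rw [inv_mul_le_iff₀ (neg_pos.2 hneg)]
    linarith [hsupp y hy]
  simpa using le_sub_iff_add_le'.1 hslope

end TopologicalVectorSpace

section NormedSpace

variable {E : Type*} [NormedAddCommGroup E] [NormedSpace ℝ E] {g h : E → ℝ} {s : Set E} {x : E}

theorem hasFDerivAt_of_eventuallyLE_of_eventuallyLE {u f v : E → ℝ} {f' : E →L[ℝ] ℝ}
    (hu : HasFDerivAt u f' x) (hv : HasFDerivAt v f' x) (huf : u ≤ᶠ[𝓝 x] f) (hfv : f ≤ᶠ[𝓝 x] v)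
    (hux : u x = f x) (hvx : v x = f x) : HasFDerivAt f f' x := by
  refine .of_isLittleO <| (Asymptotics.IsBigO.of_norm_eventuallyLE ?_).trans_isLittleO
    (hu.isLittleO.norm_left.add hv.isLittleO.norm_left)
  filter_upwards [huf, hfv] with y huy hvy
  rw [hux, hvx]
  exact (abs_le_max_abs_abs (by linarith) (by linarith)).trans
    (max_le_add_of_nonneg (abs_nonneg _) (abs_nonneg _))

theorem IsSubgradientOn.eq_of_hasFDerivAt {l g' : E →L[ℝ] ℝ} (hl : IsSubgradientOn g s x l)
    (hs : s ∈ 𝓝 x) (hg : HasFDerivAt g g' x) : g' = l := by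
  have hmin : IsLocalMin (fun y => g y - l y) x := by
    filter_upwards [hs] with y hy
    have hly := hl y hy
    rw [map_sub] at hly
    linarith
  exact sub_eq_zero.1 (hmin.hasFDerivAt_eq_zero (hg.fun_sub l.hasFDerivAt))

theorem IsSubgradientOn.hasFDerivAt_of_differentiableAt_add {l m : E →L[ℝ] ℝ}
    (hl : IsSubgradientOn g s x l) (hm : IsSubgradientOn h s x m) (hs : s ∈ 𝓝 x)
    (hd : DifferentiableAt ℝ (fun y => g y + h y) x) : HasFDerivAt g l x := by
  have hsum : HasFDerivAt (fun y => g y + h y) (l + m) x :=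
    (hl.add hm).eq_of_hasFDerivAt hs hd.hasFDerivAt ▸ hd.hasFDerivAt
  have haffine (k : E →L[ℝ] ℝ) (c : ℝ) : HasFDerivAt (fun y => c + k (y - x)) k x :=
    (k.hasFDerivAt.comp x ((hasFDerivAt_id x).sub_const x)).const_add c
  have hupper : HasFDerivAt (fun y => g y + h y - (h x + m (y - x))) l x := by
    simpa only [add_sub_cancel_right] using hsum.fun_sub (haffine m (h x))
  refine hasFDerivAt_of_eventuallyLE_of_eventuallyLE (haffine l (g x)) hupper
    (eventually_of_mem hs hl) (eventually_of_mem hs fun y hy => ?_) (by simp) (by simp)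
  linarith [hm y hy]

theorem differentiableAt_add_iff_of_convexOn (hg : ConvexOn ℝ s g) (hh : ConvexOn ℝ s h)
    (hs : s ∈ 𝓝 x) (hgc : ContinuousAt g x) :
    DifferentiableAt ℝ (fun y => g y + h y) x ↔
      DifferentiableAt ℝ g x ∧ DifferentiableAt ℝ h x := by
  refine ⟨fun hd => ?_, fun hd => hd.1.add hd.2⟩
  have hhc : ContinuousAt h x := by
    simpa only [add_sub_cancel_left] using hd.continuousAt.fun_sub hgc
  obtain ⟨l, hl⟩ := exists_isSubgradientOn hg hs hgc
  obtain ⟨m, hm⟩ := exists_isSubgradientOn hh hs hhc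
  have hgd : DifferentiableAt ℝ g x :=
    (hl.hasFDerivAt_of_differentiableAt_add hm hs hd).differentiableAt
  exact ⟨hgd, by simpa only [add_sub_cancel_left] using hd.fun_sub hgd⟩

theorem nondiff_add_convex_general (hs : IsOpen s) (hg : ConvexOn ℝ s g) (hh : ConvexOn ℝ s h)
    (hgc : ContinuousOn g s) :
    {x ∈ s | ¬ DifferentiableAt ℝ (fun y => g y + h y) x} =
      {x ∈ s | ¬ DifferentiableAt ℝ g x} ∪ {x ∈ s | ¬ DifferentiableAt ℝ h x} := by
  rw [← sep_or]
  refine sep_ext_iff.2 fun x hx => ?_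
  have hsx := hs.mem_nhds hx
  rw [differentiableAt_add_iff_of_convexOn hg hh hsx (hgc.continuousAt hsx), not_and_or]

end NormedSpace

/-- For convex functions `g, h : ℝⁿ → ℝ`, the set of points of
non-differentiability of `g + h` is the union of the sets of points of
non-differentiability of `g` and of `h`. -/
theorem nondiff_add_convex (n : ℕ) (hn : 1 ≤ n) (g h : (Fin n → ℝ) → ℝ)
    (hg : ConvexOn ℝ Set.univ g) (hh : ConvexOn ℝ Set.univ h) :
    {x : Fin n → ℝ | ¬ DifferentiableAt ℝ (fun y => g y + h y) x} =
      {x : Fin n → ℝ | ¬ DifferentiableAt ℝ g x} ∪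
        {x : Fin n → ℝ | ¬ DifferentiableAt ℝ h x} := by
  simpa only [mem_univ, true_and] using
    nondiff_add_convex_general isOpen_univ hg hh (hg.continuousOn isOpen_univ)
end

section
/- Let n ≥ 1, let S, T ⊆ ℤⁿ be nonempty finite sets, and let P = conv(S) and Q = conv(T) be the associated lattice polytopes in ℝⁿ. Then there exists a lattice polytope R (the convex hull of a nonempty finite subset of ℤⁿ) such that P = Q + R (Minkowski sum) if and only if the function x ↦ max_{s∈S}⟨s,x⟩ − max_{t∈T}⟨t,x⟩ is convex on ℝⁿ. -/
open Pointwise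

/-- The canonical embedding of `ℤⁿ` into `ℝⁿ`. -/
def intToReal {n : ℕ} (a : Fin n → ℤ) : Fin n → ℝ := fun i => (a i : ℝ)

/-- A lattice polytope in `ℝⁿ` is the convex hull of a nonempty finite subset of `ℤⁿ`. -/
def IsLatticePolytope {n : ℕ} (P : Set (Fin n → ℝ)) : Prop :=
  ∃ S : Finset (Fin n → ℤ), S.Nonempty ∧ P = convexHull ℝ (intToReal '' ↑S)

/-!
A convex function which agrees with a linear form on an open set lies above that form everywhere.
If `f_P - f_Q` is convex, then at every point it equals one of the linear forms `⟨s - t, ·⟩`.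
The finitely many closed sets on which it equals a given one of these forms cover the space, so
their interiors are dense. Hence on a dense set, and by continuity everywhere, `f_P - f_Q` is the
maximum of those forms `⟨s - t, ·⟩` that lie below it, that is, the support function of a lattice
polytope `R`. Support functions are additive under Minkowski sum and determine polytopes, so
`f_P = f_Q + f_R` amounts to `P = Q + R`.
-/

open Set Topology

section FiniteClosedCover

variable {X ι : Type*} [TopologicalSpace X] {s : Finset ι} {f : ι → Set X}

lemma interior_biUnion_finset_eq_empty (hc : ∀ i ∈ s, IsClosed (f i))
    (hf : ∀ i ∈ s, interior (f i) = ∅) : interior (⋃ i ∈ s, f i) = ∅ := by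
  classical
  induction s using Finset.induction_on with
  | empty => simp
  | insert i s _ ih =>
    rw [Finset.forall_mem_insert] at hc hf
    rw [Finset.set_biUnion_insert, interior_union_isClosed_of_interior_empty hc.1 (ih hc.2 hf.2),
      hf.1]

lemma dense_biUnion_finset_interior (hc : ∀ i ∈ s, IsClosed (f i))
    (hcover : ⋃ i ∈ s, f i = univ) : Dense (⋃ i ∈ s, interior (f i)) := by
  have hfrontier : interior (⋃ i ∈ s, frontier (f i)) = ∅ :=
    interior_biUnion_finset_eq_empty (fun _ _ => isClosed_frontier)
      fun i hi => interior_frontier (hc i hi)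
  refine (interior_eq_empty_iff_dense_compl.1 hfrontier).mono fun x hx => ?_
  obtain ⟨i, hi, hxi⟩ := mem_iUnion₂.1 (hcover.symm ▸ mem_univ x)
  refine mem_biUnion hi (by_contra fun hint => hx (mem_biUnion hi ?_))
  exact (hc i hi).frontier_eq ▸ ⟨hxi, hint⟩

end FiniteClosedCover

section SupportFun

variable {V ι : Type*} [AddCommGroup V] [Module ℝ V]

/-- The support function `x ↦ max_{i ∈ S} ℓ i x` of a nonempty finite family of linear forms.
For `ℓ s = ⟨s, ·⟩` this is the tropical polynomial function with support `S`. -/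
def supportFun (ℓ : ι → Module.Dual ℝ V) {S : Finset ι} (hS : S.Nonempty) (x : V) : ℝ :=
  S.sup' hS fun i => ℓ i x

variable {ℓ : ι → Module.Dual ℝ V} {S : Finset ι}

lemma apply_le_supportFun (hS : S.Nonempty) {i : ι} (hi : i ∈ S) (x : V) :
    ℓ i x ≤ supportFun ℓ hS x :=
  Finset.le_sup' (fun i => ℓ i x) hi

lemma supportFun_le_iff (hS : S.Nonempty) {x : V} {c : ℝ} :
    supportFun ℓ hS x ≤ c ↔ ∀ i ∈ S, ℓ i x ≤ c :=
  Finset.sup'_le_iff hS _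

variable (ℓ) in
lemma exists_supportFun_eq (hS : S.Nonempty) (x : V) : ∃ i ∈ S, supportFun ℓ hS x = ℓ i x :=
  Finset.exists_mem_eq_sup' hS _

lemma convexOn_supportFun (hS : S.Nonempty) : ConvexOn ℝ univ (supportFun ℓ hS) := by
  refine ⟨convex_univ, fun x _ y _ a b ha hb _ => (supportFun_le_iff hS).2 fun i hi => ?_⟩
  rw [map_add, map_smul, map_smul]
  gcongr <;> exact apply_le_supportFun hS hi _

lemma continuous_supportFun [TopologicalSpace V] (hS : S.Nonempty)
    (hℓ : ∀ i ∈ S, Continuous (ℓ i)) : Continuous (supportFun ℓ hS) :=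
  Continuous.finset_sup'_apply hS hℓ

lemma supportFun_add {M : Type*} [AddZeroClass M] [DecidableEq M] (ℓ : M →+ Module.Dual ℝ V)
    {S T : Finset M} (hS : S.Nonempty) (hT : T.Nonempty) :
    supportFun ℓ (hS.add hT) = supportFun ℓ hS + supportFun ℓ hT := by
  ext x
  apply le_antisymm
  · refine (supportFun_le_iff _).2 fun m hm => ?_
    obtain ⟨s, hs, t, ht, rfl⟩ := Finset.mem_add.1 hm
    rw [map_add]
    exact add_le_add (apply_le_supportFun hS hs x) (apply_le_supportFun hT ht x)
  · obtain ⟨s, hs, hsx⟩ := exists_supportFun_eq ℓ hS x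
    obtain ⟨t, ht, htx⟩ := exists_supportFun_eq ℓ hT x
    rw [Pi.add_apply, hsx, htx, ← LinearMap.add_apply, ← map_add]
    exact apply_le_supportFun _ (Finset.add_mem_add hs ht) x

end SupportFun

section ConvexPiecewiseLinear

variable {V : Type*} [AddCommGroup V] [Module ℝ V]

lemma le_of_convexOn_of_eventuallyEq [TopologicalSpace V] [IsTopologicalAddGroup V]
    [ContinuousSMul ℝ V] {g : V → ℝ} (hg : ConvexOn ℝ univ g) (l : Module.Dual ℝ V) {y : V}
    (h : g =ᶠ[𝓝 y] l) (z : V) : l z ≤ g z := by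
  have hloc : IsLocalMin (g - ⇑l) y := by
    filter_upwards [h] with w hw
    simp [hw, h.self_of_nhds]
  have hmin := IsMinOn.of_isLocalMin_of_convex_univ hloc (hg.sub (l.concaveOn convex_univ)) z
  simpa [h.self_of_nhds] using hmin

lemma exists_eq_supportFun_of_convexOn [TopologicalSpace V] [IsTopologicalAddGroup V]
    [ContinuousSMul ℝ V] {ι : Type*} {ℓ : ι → Module.Dual ℝ V} {F : Finset ι}
    (hℓ : ∀ i ∈ F, Continuous (ℓ i)) {g : V → ℝ} (hg : ConvexOn ℝ univ g) (hgc : Continuous g)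
    (hsel : ∀ x, ∃ i ∈ F, g x = ℓ i x) :
    ∃ U ⊆ F, ∃ hU : U.Nonempty, g = supportFun ℓ hU := by
  classical
  let U := F.filter fun i => ∀ x, ℓ i x ≤ g x
  have hUF : U ⊆ F := Finset.filter_subset _ _
  have hdense : Dense (⋃ i ∈ F, interior {x | g x = ℓ i x}) :=
    dense_biUnion_finset_interior (fun i hi => isClosed_eq hgc (hℓ i hi))
      (eq_univ_of_forall fun x => by simpa using hsel x)
  have hattained : ∀ y ∈ ⋃ i ∈ F, interior {x | g x = ℓ i x}, ∃ i ∈ U, g y = ℓ i y := by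
    intro y hy
    obtain ⟨i, hi, hyi⟩ := mem_iUnion₂.1 hy
    have heq : g =ᶠ[𝓝 y] ℓ i := mem_interior_iff_mem_nhds.1 hyi
    exact ⟨i, Finset.mem_filter.2 ⟨hi, le_of_convexOn_of_eventuallyEq hg _ heq⟩, heq.self_of_nhds⟩
  have hU : U.Nonempty :=
    let ⟨y, hy⟩ := hdense.nonempty
    let ⟨i, hi, _⟩ := hattained y hy
    ⟨i, hi⟩
  refine ⟨U, hUF, hU, hgc.ext_on hdense
    (continuous_supportFun hU fun i hi => hℓ i (hUF hi)) fun y hy => ?_⟩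
  obtain ⟨i, hi, hiy⟩ := hattained y hy
  exact le_antisymm (hiy ▸ apply_le_supportFun hU hi y)
    ((supportFun_le_iff hU).2 fun j hj => (Finset.mem_filter.1 hj).2 y)

lemma exists_supportFun_eq_add_iff_convexOn_sub {M : Type*} [AddGroup M]
    (ℓ : M →+ Module.Dual ℝ V) {S T : Finset M} (hS : S.Nonempty) (hT : T.Nonempty) :
    (∃ (U : Finset M) (hU : U.Nonempty),
        supportFun ℓ hS = supportFun ℓ hT + supportFun ℓ hU) ↔
      ConvexOn ℝ univ (supportFun ℓ hS - supportFun ℓ hT) := by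
  classical
  constructor
  · rintro ⟨U, hU, h⟩
    rw [h, add_sub_cancel_left]
    exact convexOn_supportFun hU
  · intro hconv
    -- `V` carries no topology: give it the weakest one making all linear forms continuous.
    let : TopologicalSpace V := WeakBilin.instTopologicalSpace (Module.Dual.eval ℝ V)
    have : IsTopologicalAddGroup V :=
      WeakBilin.instIsTopologicalAddGroup (Module.Dual.eval ℝ V)
    have : ContinuousSMul ℝ V := WeakBilin.instContinuousSMul (Module.Dual.eval ℝ V)
    have hℓ (m : M) : Continuous (ℓ m) := WeakBilin.eval_continuous (Module.Dual.eval ℝ V) (ℓ m)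
    have hsel (x : V) : ∃ m ∈ S - T, (supportFun ℓ hS - supportFun ℓ hT) x = ℓ m x := by
      obtain ⟨s, hs, hsx⟩ := exists_supportFun_eq ℓ hS x
      obtain ⟨t, ht, htx⟩ := exists_supportFun_eq ℓ hT x
      refine ⟨s - t, Finset.sub_mem_sub hs ht, ?_⟩
      rw [map_sub, LinearMap.sub_apply, ← hsx, ← htx, Pi.sub_apply]
    obtain ⟨U, -, hU, h⟩ := exists_eq_supportFun_of_convexOn (fun m _ => hℓ m) hconv
      ((continuous_supportFun hS fun m _ => hℓ m).sub (continuous_supportFun hT fun m _ => hℓ m))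
      hsel
    exact ⟨U, hU, sub_eq_iff_eq_add'.1 h⟩

end ConvexPiecewiseLinear

section Polytope

variable {E V ι : Type*} [AddCommGroup E] [Module ℝ E] [AddCommGroup V] [Module ℝ V]
  {B : E →ₗ[ℝ] V →ₗ[ℝ] ℝ}

lemma exists_forall_lt_of_notMem_convexHull (hB : B.SeparatingLeft) {A : Set E} (hA : A.Finite)
    {p : E} (hp : p ∉ convexHull ℝ A) : ∃ x, ∀ a ∈ A, B a x < B p x := by
  -- Hahn–Banach in the weak topology of the pairing, whose continuous linear forms come from `V`.
  have : T2Space (WeakBilin B) :=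
    (WeakBilin.isEmbedding
      (LinearMap.ker_eq_bot.1 (LinearMap.separatingLeft_iff_ker_eq_bot.1 hB))).t2Space
  obtain ⟨f, c, hlt, hc⟩ := geometric_hahn_banach_closed_point (E := WeakBilin B)
    (convex_convexHull ℝ A) (hA.isClosed_convexHull (E := WeakBilin B) ℝ) hp
  obtain ⟨x, rfl⟩ := LinearMap.dualEmbedding_surjective B f
  exact ⟨x, fun a ha => (hlt a (subset_convexHull ℝ A ha)).trans hc⟩

lemma mem_convexHull_image_iff_le_supportFun (hB : B.SeparatingLeft) (φ : ι → E) {S : Finset ι}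
    (hS : S.Nonempty) {p : E} :
    p ∈ convexHull ℝ (φ '' S) ↔ ∀ x, B p x ≤ supportFun (fun i => B (φ i)) hS x := by
  constructor
  · intro hp x
    have hsub : convexHull ℝ (φ '' S) ⊆ {q | B.flip x q ≤ supportFun (fun i => B (φ i)) hS x} :=
      convexHull_min (image_subset_iff.2 fun i hi =>
        apply_le_supportFun (ℓ := fun i => B (φ i)) hS hi x)
        (convex_halfSpace_le (B.flip x).isLinear _)
    exact hsub hp
  · contrapose!
    intro hp
    obtain ⟨x, hx⟩ := exists_forall_lt_of_notMem_convexHull hB (S.finite_toSet.image φ) hp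
    obtain ⟨i, hi, hix⟩ := exists_supportFun_eq (fun i => B (φ i)) hS x
    exact ⟨x, hix ▸ hx _ (mem_image_of_mem φ hi)⟩

lemma convexHull_image_subset_iff_supportFun_le (hB : B.SeparatingLeft) (φ : ι → E)
    {S T : Finset ι} (hS : S.Nonempty) (hT : T.Nonempty) :
    convexHull ℝ (φ '' S) ⊆ convexHull ℝ (φ '' T) ↔
      supportFun (fun i => B (φ i)) hS ≤ supportFun (fun i => B (φ i)) hT := by
  rw [(convex_convexHull ℝ _).convexHull_subset_iff, image_subset_iff]
  simp only [subset_def, mem_preimage, SetLike.mem_coe, Pi.le_def, supportFun_le_iff,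
    mem_convexHull_image_iff_le_supportFun hB φ hT]
  exact ⟨fun h x i hi => h i hi x, fun h i hi x => h x i hi⟩

lemma convexHull_image_eq_iff_supportFun_eq (hB : B.SeparatingLeft) (φ : ι → E)
    {S T : Finset ι} (hS : S.Nonempty) (hT : T.Nonempty) :
    convexHull ℝ (φ '' S) = convexHull ℝ (φ '' T) ↔
      supportFun (fun i => B (φ i)) hS = supportFun (fun i => B (φ i)) hT := by
  rw [subset_antisymm_iff, le_antisymm_iff, convexHull_image_subset_iff_supportFun_le hB φ hS hT,
    convexHull_image_subset_iff_supportFun_le hB φ hT hS]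

lemma convexHull_image_eq_add_iff_supportFun_eq_add {M : Type*} [AddZeroClass M]
    (hB : B.SeparatingLeft) (φ : M →+ E) {S T U : Finset M} (hS : S.Nonempty) (hT : T.Nonempty)
    (hU : U.Nonempty) :
    convexHull ℝ (φ '' S) = convexHull ℝ (φ '' T) + convexHull ℝ (φ '' U) ↔
      supportFun (fun m => B (φ m)) hS =
        supportFun (fun m => B (φ m)) hT + supportFun (fun m => B (φ m)) hU := by
  classical
  rw [← convexHull_add, ← image_add, ← Finset.coe_add,
    convexHull_image_eq_iff_supportFun_eq hB φ hS (hT.add hU)]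
  exact Eq.congr_right (supportFun_add (B.toAddMonoidHom.comp φ) hT hU)

end Polytope

lemma separatingLeft_dotProductBilin (R n : Type*) [CommSemiring R] [Fintype n] :
    (dotProductBilin R R : (n → R) →ₗ[R] (n → R) →ₗ[R] R).SeparatingLeft :=
  fun v hv => dotProduct_eq_zero v hv

theorem minkowski_factorization_iff_convex_general {M E V : Type*} [AddGroup M]
    [AddCommGroup E] [Module ℝ E] [AddCommGroup V] [Module ℝ V] (φ : M →+ E)
    (B : E →ₗ[ℝ] V →ₗ[ℝ] ℝ) (hB : B.SeparatingLeft) (S T : Finset M) (hS : S.Nonempty)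
    (hT : T.Nonempty) :
    (∃ U : Finset M, U.Nonempty ∧
        convexHull ℝ (φ '' S) = convexHull ℝ (φ '' T) + convexHull ℝ (φ '' U)) ↔
      ConvexOn ℝ univ fun x =>
        (S.sup' hS fun s => B (φ s) x) - (T.sup' hT fun t => B (φ t) x) := by
  refine Iff.trans ?_
    (exists_supportFun_eq_add_iff_convexOn_sub (B.toAddMonoidHom.comp φ) hS hT)
  refine exists_congr fun U => exists_prop.symm.trans (exists_congr fun hU => ?_)
  exact convexHull_image_eq_add_iff_supportFun_eq_add hB φ hS hT hU

/-- For lattice polytopes `P = conv S`, `Q = conv T`, there is a lattice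
polytope `R` with `P = Q + R` (Minkowski sum) iff `x ↦ max_{s∈S}⟨s,x⟩ − max_{t∈T}⟨t,x⟩`
is convex on ℝⁿ. -/
theorem minkowski_factorization_iff_convex (n : ℕ) (hn : 1 ≤ n)
    (S T : Finset (Fin n → ℤ)) (hS : S.Nonempty) (hT : T.Nonempty)
    (P Q : Set (Fin n → ℝ))
    (hP : P = convexHull ℝ (intToReal '' ↑S))
    (hQ : Q = convexHull ℝ (intToReal '' ↑T)) :
    (∃ R : Set (Fin n → ℝ), IsLatticePolytope R ∧ P = Q + R) ↔
    ConvexOn ℝ Set.univ (fun x : Fin n → ℝ =>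
      (S.sup' hS fun s => ∑ i, (s i : ℝ) * x i) -
        (T.sup' hT fun t => ∑ i, (t i : ℝ) * x i)) := by
  subst hP hQ
  simpa only [IsLatticePolytope, ↓existsAndEq, and_true] using!
    minkowski_factorization_iff_convex_general ((Int.castAddHom ℝ).compLeft (Fin n))
      (dotProductBilin ℝ ℝ) (separatingLeft_dotProductBilin ℝ (Fin n)) S T hS hT
end

section
/- Let A, B, C ⊆ ℝⁿ be nonempty compact convex sets. If A + B = A + C (Minkowski sum), then B = C. -/
open Pointwise

/-! Continuous linear functionals turn Minkowski sums of sets into sums of subsets of `ℝ`, where a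
nonempty summand that is bounded above can be cancelled by comparing suprema. By Hahn–Banach, a
closed convex set is determined by the upper bounds of its images under these functionals. -/

theorem upperBounds_subset_of_add_subset_add_left {G : Type*} [AddCommGroup G]
    [ConditionallyCompleteLattice G] [IsOrderedAddMonoid G] {S T U : Set G}
    (hS : S.Nonempty) (hSb : BddAbove S) (h : S + T ⊆ S + U) :
    upperBounds U ⊆ upperBounds T := by
  intro u hu t ht
  have hsum : ∀ x ∈ S + U, x ≤ sSup S + u := by
    rintro _ ⟨s, hs, v, hv, rfl⟩
    exact add_le_add (le_csSup hSb hs) (hu hv)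
  have hsup : sSup S ≤ sSup S + u - t :=
    csSup_le hS fun s hs => le_sub_iff_add_le.mpr (hsum _ (h (Set.add_mem_add hs ht)))
  exact le_of_add_le_add_left (le_sub_iff_add_le.mp hsup)

section LocallyConvex

variable {E : Type*} [AddCommGroup E] [Module ℝ E] [TopologicalSpace E]

theorem bddAbove_image_of_isVonNBounded {A : Set E} (hA : Bornology.IsVonNBounded ℝ A)
    (f : StrongDual ℝ E) : BddAbove (f '' A) :=
  ((NormedSpace.isVonNBounded_iff ℝ).mp (hA.image f)).bddAbove

variable [IsTopologicalAddGroup E] [ContinuousSMul ℝ E] [LocallyConvexSpace ℝ E] {A B C : Set E}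

theorem subset_iff_forall_upperBounds_image_subset (hC : IsClosed C) (hCv : Convex ℝ C) :
    B ⊆ C ↔ ∀ f : StrongDual ℝ E, upperBounds (f '' C) ⊆ upperBounds (f '' B) := by
  refine ⟨fun hBC f => upperBounds_mono_set (Set.image_mono hBC), fun h b hb => ?_⟩
  by_contra hbC
  obtain ⟨f, u, hfC, hfb⟩ := geometric_hahn_banach_closed_point hCv hC hbC
  have hu : u ∈ upperBounds (f '' C) := Set.forall_mem_image.mpr fun c hc => (hfC c hc).le
  exact (h f hu (Set.mem_image_of_mem f hb)).not_gt hfb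

theorem subset_of_add_subset_add_left (hA : A.Nonempty) (hAb : Bornology.IsVonNBounded ℝ A)
    (hC : IsClosed C) (hCv : Convex ℝ C) (h : A + B ⊆ A + C) : B ⊆ C := by
  refine (subset_iff_forall_upperBounds_image_subset hC hCv).mpr fun f => ?_
  have himage : f '' A + f '' B ⊆ f '' A + f '' C := by
    simpa only [Set.image_add] using Set.image_mono (f := f) h
  exact upperBounds_subset_of_add_subset_add_left (hA.image f)
    (bddAbove_image_of_isVonNBounded hAb f) himage

theorem minkowski_cancellation_general (hA : A.Nonempty) (hAb : Bornology.IsVonNBounded ℝ A)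
    (hB : IsClosed B) (hC : IsClosed C) (hBv : Convex ℝ B) (hCv : Convex ℝ C)
    (h : A + B = A + C) : B = C :=
  (subset_of_add_subset_add_left hA hAb hC hCv h.subset).antisymm
    (subset_of_add_subset_add_left hA hAb hB hBv h.superset)

end LocallyConvex

/-- Minkowski addition of nonempty compact convex sets is cancellative. -/
theorem minkowski_cancellation (n : ℕ) (A B C : Set (Fin n → ℝ))
    (hA : A.Nonempty) (hB : B.Nonempty) (hC : C.Nonempty)
    (hAc : IsCompact A) (hBc : IsCompact B) (hCc : IsCompact C)
    (hAv : Convex ℝ A) (hBv : Convex ℝ B) (hCv : Convex ℝ C)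
    (h : A + B = A + C) : B = C :=
  minkowski_cancellation_general hA (hAc.isVonNBounded ℝ) hBc.isClosed hCc.isClosed hBv hCv h
end

section
/- Let P and Q be polytopes in ℝⁿ, i.e. convex hulls of nonempty finite sets. Then the number of extreme points of P is at most the number of extreme points of the Minkowski sum P + Q. -/
open Pointwise

/-!
Choose for each extreme point `z` of `P + Q` a decomposition `z = p z + q z` with `p z ∈ P` and
`q z ∈ Q`, and let `C` be the convex hull of the points `p z`. Since `P + Q` is the convex hull of
its extreme points, `P + Q ⊆ C + Q`. A compact summand cancels from an inclusion into a sum with a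
closed convex set, so `P = C`, and every extreme point of `P` is one of the points `p z`.
-/

theorem finite_extremePoints_convexHull_add_convexHull {𝕜 E : Type*} [Field 𝕜] [LinearOrder 𝕜]
    [IsStrictOrderedRing 𝕜] [AddCommGroup E] [Module 𝕜 E] {S T : Set E} (hS : S.Finite)
    (hT : T.Finite) : ((convexHull 𝕜 S + convexHull 𝕜 T).extremePoints 𝕜).Finite := by
  rw [← convexHull_add]
  exact (hS.add hT).subset extremePoints_convexHull_subset

section MinkowskiSum

variable {E : Type*} [AddCommGroup E] [Module ℝ E] [TopologicalSpace E] [IsTopologicalAddGroup E]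
  [ContinuousSMul ℝ E] [LocallyConvexSpace ℝ E] {A B C Z : Set E}

theorem subset_of_add_subset_add_right_of_isCompact (hB : IsCompact B) (hBne : B.Nonempty)
    (hCconv : Convex ℝ C) (hC : IsClosed C) (h : A + B ⊆ C + B) : A ⊆ C := by
  intro a ha
  by_contra haC
  obtain ⟨f, u, hfC, hfa⟩ := geometric_hahn_banach_closed_point hCconv hC haC
  obtain ⟨b, hb, hbmax⟩ := hB.exists_isMaxOn hBne f.continuous.continuousOn
  obtain ⟨c, hc, b', hb', hsum⟩ := h (Set.add_mem_add ha hb)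
  have hlt : f (c + b') < f (a + b) := by
    simpa only [map_add] using add_lt_add_of_lt_of_le ((hfC c hc).trans hfa) (hbmax hb')
  exact hlt.ne (congrArg f hsum)

variable [T2Space E]

theorem exists_convexHull_eq_of_add_eq_convexHull (hAconv : Convex ℝ A) (hB : IsCompact B)
    (hBconv : Convex ℝ B) (hBne : B.Nonempty) (hZ : Z.Finite) (h : A + B = convexHull ℝ Z) :
    ∃ V : Set E, V.encard ≤ Z.encard ∧ convexHull ℝ V = A := by
  have hdecomp : ∀ z ∈ Z, ∃ p ∈ A, ∃ q ∈ B, p + q = z := fun z hz =>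
    Set.mem_add.1 (h ▸ subset_convexHull ℝ Z hz)
  choose! p hpA q hqB hpq using hdecomp
  have hZ_subset : Z ⊆ convexHull ℝ (p '' Z) + B := fun z hz =>
    ⟨p z, subset_convexHull ℝ _ (Set.mem_image_of_mem p hz), q z, hqB z hz, hpq z hz⟩
  have hadd : A + B ⊆ convexHull ℝ (p '' Z) + B :=
    h ▸ convexHull_min hZ_subset ((convex_convexHull ℝ _).add hBconv)
  exact ⟨p '' Z, Set.encard_image_le p Z,
    (convexHull_min (Set.image_subset_iff.2 hpA) hAconv).antisymm
      (subset_of_add_subset_add_right_of_isCompact hB hBne (convex_convexHull ℝ _)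
        ((hZ.image p).isClosed_convexHull ℝ) hadd)⟩

theorem convexHull_extremePoints_of_finite_extremePoints (hA : IsCompact A) (hAconv : Convex ℝ A)
    (hfin : (A.extremePoints ℝ).Finite) : convexHull ℝ (A.extremePoints ℝ) = A := by
  rw [← (hfin.isClosed_convexHull ℝ).closure_eq, closure_convexHull_extremePoints hA hAconv]

theorem card_extremePoints_le_minkowski_sum_general (hA : IsCompact A) (hAconv : Convex ℝ A)
    (hB : IsCompact B) (hBconv : Convex ℝ B) (hBne : B.Nonempty) :
    (A.extremePoints ℝ).encard ≤ ((A + B).extremePoints ℝ).encard := by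
  obtain hfin | hinf := ((A + B).extremePoints ℝ).finite_or_infinite
  · obtain ⟨V, hcard, rfl⟩ := exists_convexHull_eq_of_add_eq_convexHull hAconv hB hBconv hBne hfin
      (convexHull_extremePoints_of_finite_extremePoints (hA.add hB) (hAconv.add hBconv)
        hfin).symm
    exact (Set.encard_le_encard extremePoints_convexHull_subset).trans hcard
  · exact hinf.encard_eq ▸ le_top

end MinkowskiSum

/-- The number of extreme points of a polytope `P` is at most the number of
extreme points of the Minkowski sum `P + Q`. -/
theorem card_extremePoints_le_minkowski_sum (n : ℕ)
    (S T : Finset (Fin n → ℝ)) (hS : S.Nonempty) (hT : T.Nonempty)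
    (P Q : Set (Fin n → ℝ))
    (hP : P = convexHull ℝ ↑S) (hQ : Q = convexHull ℝ ↑T) :
    (Set.extremePoints ℝ P).ncard ≤ (Set.extremePoints ℝ (P + Q)).ncard := by
  subst hP hQ
  exact ENat.toNat_le_toNat
    (card_extremePoints_le_minkowski_sum_general
      (S.finite_toSet.isCompact_convexHull ℝ) (convex_convexHull ℝ _)
      (T.finite_toSet.isCompact_convexHull ℝ) (convex_convexHull ℝ _) hT.to_set.convexHull)
    (finite_extremePoints_convexHull_add_convexHull S.finite_toSet T.finite_toSet).encard_lt_top.ne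
end

section
/- Let m ≥ 1 and let L be a subgroup (ℤ-submodule) of ℤᵐ that contains a vector w with wᵢ > 0 for every coordinate i ∈ {1,…,m}. Then L admits a ℤ-basis b₁, …, b_r (a linearly independent family whose ℤ-span is L) such that every basis vector has all coordinates nonnegative. -/
/-!
A nonzero vector `w` of a free module over a principal ideal domain is a multiple of a member `u`
of some basis, by the Smith normal form of the line it spans. If the module is ordered and `w` is
an order unit, then so is `u` or `-u`, and adding to each of the other basis vectors a large enough
multiple of that order unit makes them nonnegative without leaving the set of bases.
-/

open Module

theorem exists_basis_eq_smul {R M ι : Type*} [CommRing R] [IsDomain R] [IsPrincipalIdealRing R]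
    [AddCommGroup M] [Module R M] [Finite ι] (b₀ : Basis ι R M) {w : M} (hw : w ≠ 0) :
    ∃ (b : Basis ι R M) (p : ι) (d : R), w = d • b p := by
  have : IsTorsionFree R M := b₀.isTorsionFree
  obtain ⟨n, bM, bN, f, a, snf⟩ := (Submodule.span R {w}).smithNormalForm b₀
  obtain rfl : n = 1 := by
    have hrank := (LinearEquiv.toSpanNonzeroSingleton R M w hw).finrank_eq
    rw [finrank_self, finrank_eq_card_basis bN, Fintype.card_fin] at hrank
    exact hrank.symm
  have hsum := congrArg Subtype.val (bN.sum_repr ⟨w, Submodule.mem_span_singleton_self w⟩)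
  rw [Fin.sum_univ_one, Submodule.coe_smul, snf, smul_smul] at hsum
  exact ⟨bM, f 0, _, hsum.symm⟩

theorem exists_basis_eq_add_smul {R M ι : Type*} [Ring R] [AddCommGroup M] [Module R M]
    (b : Basis ι R M) {p : ι} {k : ι → R} (hk : k p = 0) :
    ∃ e : Basis ι R M, ∀ j, e j = b j + k j • b p := by
  have hp : b.constr ℕ k (b p) = 0 := by rw [b.constr_basis, hk]
  refine ⟨b.map (LinearEquiv.transvection hp), fun j => ?_⟩
  rw [b.map_apply, LinearEquiv.transvection.apply, b.constr_basis]

/-- A nonnegative element `u` of an ordered module is an *order unit* if its multiples are cofinal.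
The multiples are taken with scalars in `R` rather than in `ℕ`. -/
structure IsOrderUnit (R : Type*) {M : Type*} [Zero M] [Preorder M] [SMul R M] (u : M) : Prop where
  nonneg : 0 ≤ u
  exists_le_smul : ∀ x, ∃ k : R, x ≤ k • u

theorem isOrderUnit_of_forall_pos {R ι : Type*} [Semiring R] [PartialOrder R] [IsOrderedAddMonoid R]
    [Archimedean R] [Finite ι] {w : ι → R} (hw : ∀ i, 0 < w i) : IsOrderUnit R w where
  nonneg i := (hw i).le
  exists_le_smul x := by
    choose n hn using fun i => Archimedean.arch (x i) (hw i)
    obtain ⟨N, hN⟩ := Finite.exists_le n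
    refine ⟨N, fun i => ?_⟩
    calc x i ≤ n i • w i := hn i
      _ ≤ N • w i := nsmul_le_nsmul_left (hw i).le (hN i)
      _ = (N : R) • w i := (Nat.cast_smul_eq_nsmul R N (w i)).symm

theorem isTorsionFree_of_posSMulReflectLE {R M : Type*} [Ring R] [LinearOrder R]
    [IsStrictOrderedRing R] [AddCommGroup M] [PartialOrder M] [Module R M]
    [PosSMulReflectLE R M] : IsTorsionFree R M := by
  refine .of_smul_eq_zero fun d x hdx => ?_
  have eq_zero_of_pos {c : R} (hc : 0 < c) (hcx : c • x = 0) : x = 0 :=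
    le_antisymm (le_of_smul_le_smul_left (by rw [hcx, smul_zero]) hc)
      (le_of_smul_le_smul_left (by rw [hcx, smul_zero]) hc)
  obtain hd | hd | hd := lt_trichotomy d 0
  · exact .inr (eq_zero_of_pos (neg_pos.mpr hd) (by rw [neg_smul, hdx, neg_zero]))
  · exact .inl hd
  · exact .inr (eq_zero_of_pos hd hdx)

namespace IsOrderUnit

theorem restrict {R M : Type*} [Semiring R] [AddCommMonoid M] [Preorder M] [Module R M]
    {L : Submodule R M} {u : M} (hu : IsOrderUnit R u) (huL : u ∈ L) :
    IsOrderUnit R (⟨u, huL⟩ : L) :=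
  ⟨hu.nonneg, fun x => hu.exists_le_smul x⟩

theorem exists_nonneg_basis_of_apply {R M ι : Type*} [Ring R] [AddCommGroup M] [PartialOrder M]
    [IsOrderedAddMonoid M] [Module R M] (b : Basis ι R M) {p : ι} (hp : IsOrderUnit R (b p)) :
    ∃ e : Basis ι R M, ∀ j, 0 ≤ e j := by
  classical
  choose k hk using fun j => hp.exists_le_smul (-b j)
  obtain ⟨e, he⟩ := exists_basis_eq_add_smul b (Function.update_self p 0 k)
  refine ⟨e, fun j => ?_⟩
  rw [he]
  obtain rfl | hj := eq_or_ne j p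
  · simpa only [Function.update_self, zero_smul, add_zero] using hp.nonneg
  · simpa only [Function.update_of_ne hj] using neg_le_iff_add_nonneg'.mp (hk j)

theorem of_smul {R M : Type*} [Semiring R] [Preorder R] [AddCommMonoid M] [Preorder M] [Module R M]
    [PosSMulReflectLE R M] {d : R} {u : M} (hd : 0 < d) (h : IsOrderUnit R (d • u)) :
    IsOrderUnit R u where
  nonneg := le_of_smul_le_smul_left (by simpa only [smul_zero] using h.nonneg) hd
  exists_le_smul x := by
    obtain ⟨k, hk⟩ := h.exists_le_smul x
    exact ⟨k * d, by rwa [mul_smul]⟩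

theorem exists_nonneg_basis {R M ι : Type*} [CommRing R] [LinearOrder R] [IsStrictOrderedRing R]
    [IsPrincipalIdealRing R] [AddCommGroup M] [PartialOrder M] [IsOrderedAddMonoid M] [Module R M]
    [PosSMulReflectLE R M] [Finite ι] (b₀ : Basis ι R M) {w : M} (hw : IsOrderUnit R w) :
    ∃ b : Basis ι R M, ∀ i, 0 ≤ b i := by
  obtain rfl | hw0 := eq_or_ne w 0
  · have hnonpos (x : M) : x ≤ 0 := by
      simpa only [smul_zero, exists_const] using hw.exists_le_smul x
    exact ⟨b₀, fun i => neg_nonpos.mp (hnonpos _)⟩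
  obtain ⟨b, p, d, rfl⟩ := exists_basis_eq_smul b₀ hw0
  obtain hd | rfl | hd := lt_trichotomy d 0
  · refine exists_nonneg_basis_of_apply (b.map (LinearEquiv.neg R)) (p := p)
      (of_smul (neg_pos.mpr hd) ?_)
    simpa only [Basis.map_apply, LinearEquiv.neg_apply, smul_neg, neg_smul, neg_neg] using hw
  · exact absurd (zero_smul R _) hw0
  · exact exists_nonneg_basis_of_apply b (hw.of_smul hd)

end IsOrderUnit

theorem subgroup_with_positive_vector_has_nonneg_basis_general {R N : Type*} [CommRing R]
    [LinearOrder R] [IsStrictOrderedRing R] [IsPrincipalIdealRing R] [AddCommGroup N]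
    [PartialOrder N] [IsOrderedAddMonoid N] [Module R N] [PosSMulReflectLE R N]
    (L : Submodule R N) [Module.Finite R L] {w : L} (hw : IsOrderUnit R w) :
    ∃ (r : ℕ) (b : Fin r → N),
      LinearIndependent R b ∧ Submodule.span R (Set.range b) = L ∧ ∀ i, 0 ≤ b i := by
  have : PosSMulReflectLE R L := ⟨fun _ ha _ _ h => le_of_smul_le_smul_left (β := N) h ha⟩
  have : IsTorsionFree R L := isTorsionFree_of_posSMulReflectLE
  obtain ⟨b, hb⟩ := hw.exists_nonneg_basis (finBasis R L)
  refine ⟨_, L.subtype ∘ b, b.linearIndependent.map' L.subtype L.ker_subtype, ?_, hb⟩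
  rw [Set.range_comp, Submodule.span_image, b.span_eq, Submodule.map_subtype_top]

/-- A subgroup of `ℤᵐ` containing a vector with all coordinates positive
admits a ℤ-basis consisting of vectors with all coordinates nonnegative. -/
theorem subgroup_with_positive_vector_has_nonneg_basis (m : ℕ) (hm : 1 ≤ m)
    (L : Submodule ℤ (Fin m → ℤ))
    (w : Fin m → ℤ) (hw : w ∈ L) (hwpos : ∀ i, 0 < w i) :
    ∃ (r : ℕ) (b : Fin r → (Fin m → ℤ)),
      LinearIndependent ℤ b ∧ Submodule.span ℤ (Set.range b) = L ∧
      ∀ i j, 0 ≤ b i j :=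
  subgroup_with_positive_vector_has_nonneg_basis_general L
    ((isOrderUnit_of_forall_pos hwpos).restrict hw)
end

section
/- Let n ≥ 1 and let P ⊆ ℝⁿ be a lattice polytope (the convex hull of a nonempty finite subset of ℤⁿ). Then there exist r ≥ 0 and lattice polytopes B₁, …, B_r, each of which is a Minkowski summand of some positive integer dilate of P (i.e. for each i there are m ∈ ℕ, m ≥ 1, and a lattice polytope R with Bᵢ + R = m·P), such that: for every lattice polytope Q ⊆ ℝⁿ that is a Minkowski summand of some positive integer dilate of P, there is exactly one vector y = (y₁,…,y_r) ∈ ℤʳ such that Q + Σᵢ yᵢ⁻·Bᵢ is a translate by a vector of ℤⁿ of Σᵢ yᵢ⁺·Bᵢ, where yᵢ⁺ = max{yᵢ, 0}, yᵢ⁻ = yᵢ⁺ − yᵢ, the sums are Minkowski sums, and k·B denotes the k-fold dilate (equal to the k-fold Minkowski sum for convex B). -/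
open Pointwise

/-- `Q` is a deformation of `P`: a Minkowski summand of some positive integer dilate of `P`
complemented by a lattice polytope. -/
def IsDeformation {n : ℕ} (P Q : Set (Fin n → ℝ)) : Prop :=
  ∃ m : ℕ, 1 ≤ m ∧ ∃ R : Set (Fin n → ℝ), IsLatticePolytope R ∧ Q + R = (m : ℝ) • P

/-!
Index families of points by the vertices `u v` of `P`. A summand `Q` of a dilate of `P` has a
vertex corresponding to each `u v`, so it is the hull of a family `x`; such families form a cone in
which Minkowski addition is pointwise addition, and the family is determined by the polytope. Modulo
translations, the lattice points of the linear span of this cone form a finitely generated free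
abelian group, those of the cone itself a saturated submonoid in which `u` is an order unit. Such a
submonoid contains a `ℤ`-basis of the group, and a signed Minkowski representation of `Q` is the
coordinate vector of `x` in this basis.
-/

section SaturatedSubmonoid

open Module

theorem exists_smul_eq_and_dual_apply_eq_one {R M : Type*} [CommRing R] [IsDomain R]
    [IsPrincipalIdealRing R] [AddCommGroup M] [Module R M] [Module.Free R M] [Module.Finite R M]
    {e : M} (he : e ≠ 0) : ∃ (d : R) (v : M) (f : Dual R M), d • v = e ∧ f v = 1 := by
  obtain ⟨d, hd⟩ := IsPrincipalIdealRing.principal (LinearMap.range (Dual.eval R M e))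
  have hmem (c : R) : d ∣ c ↔ ∃ f : Dual R M, f e = c := by
    rw [← Ideal.mem_span_singleton, ← Ideal.submodule_span_eq, ← hd]
    rfl
  obtain ⟨f, hf⟩ := (hmem d).1 dvd_rfl
  let b := Free.chooseBasis R M
  choose c hc using fun i => (hmem (b.repr e i)).2 ⟨b.coord i, rfl⟩
  have hv : d • ∑ i, c i • b i = e := by
    simp only [Finset.smul_sum, smul_smul, ← hc, b.sum_repr]
  have hd₀ : d ≠ 0 := by
    rintro rfl
    exact he (by rw [← hv, zero_smul])
  refine ⟨d, ∑ i, c i • b i, f, hv, mul_left_cancel₀ hd₀ ?_⟩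
  rw [mul_one, ← smul_eq_mul, ← map_smul, hv, hf]

theorem exists_nsmul_eq_and_dual_apply_eq_one {H : Type*} [AddCommGroup H] [Module.Free ℤ H]
    [Module.Finite ℤ H] {e : H} (he : e ≠ 0) :
    ∃ (k : ℕ) (v : H) (f : Dual ℤ H), k • v = e ∧ f v = 1 := by
  obtain ⟨d, v, f, rfl, hf⟩ := exists_smul_eq_and_dual_apply_eq_one (R := ℤ) he
  obtain ⟨k, rfl | rfl⟩ := d.eq_nat_or_neg
  · exact ⟨k, v, f, (natCast_zsmul v k).symm, hf⟩
  · exact ⟨k, -v, -f, by simp, by simpa using hf⟩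

theorem exists_basis_zero_eq_of_dual_apply_eq_one {R M : Type*} [CommRing R] [IsDomain R]
    [IsPrincipalIdealRing R] [AddCommGroup M] [Module R M] [Module.Free R M] [Module.Finite R M]
    {v : M} {f : Dual R M} (hf : f v = 1) :
    ∃ (r : ℕ) (b : Basis (Fin (r + 1)) R M), b 0 = v :=
  ⟨_, Basis.mkFinCons v (finBasis R (LinearMap.ker f))
    (fun c x hx h => by simpa [hf, LinearMap.mem_ker.1 hx] using congrArg f h)
    (fun z => ⟨-f z, by simp [hf]⟩), by simp⟩

-- Write `e = k • v` with `v` primitive and extend `v` to a basis. Saturation puts `v` in `M`, and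
-- shearing along `v` moves the remaining basis vectors into `M`.
theorem exists_basis_mem_of_nsmulSaturated {H : Type*} [AddCommGroup H] [Module.Free ℤ H]
    [Module.Finite ℤ H] {M : AddSubmonoid H} (hM : M.NSMulSaturated) {e : H} (he : e ∈ M)
    (hunit : ∀ x, ∃ m : ℕ, m • e + x ∈ M) :
    ∃ (r : ℕ) (b : Basis (Fin r) ℤ H), ∀ i, b i ∈ M := by
  obtain rfl | he₀ := eq_or_ne e 0
  · exact ⟨_, finBasis ℤ H, fun i => by simpa using hunit (finBasis ℤ H i)⟩
  obtain ⟨k, v, f, rfl, hfv⟩ := exists_nsmul_eq_and_dual_apply_eq_one he₀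
  obtain ⟨r, b, rfl⟩ := exists_basis_zero_eq_of_dual_apply_eq_one hfv
  choose m hm using fun i => hunit (b i)
  let shift : Dual ℤ H := b.constr ℤ (Fin.cons 0 fun i => (m i.succ * k : ℤ))
  have hshift : shift (b 0) = 0 := by simp [shift]
  refine ⟨r + 1, b.map (LinearEquiv.transvection hshift), Fin.cases ?_ fun i => ?_⟩
  · have hk : k ≠ 0 := by
      rintro rfl
      simp at he₀
    simpa [LinearMap.transvection.apply, hshift] using (hM he).resolve_left hk
  · have hi : shift (b i.succ) = m i.succ * k := by simp [shift]
    simpa [LinearMap.transvection.apply, hi, mul_smul, add_comm] using hm i.succ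

end SaturatedSubmonoid

section ConvexHull

variable {ι E : Type*} [AddCommGroup E] [Module ℝ E]

theorem convexHull_range_smul (t : ℝ) (x : ι → E) :
    convexHull ℝ (Set.range (t • x)) = t • convexHull ℝ (Set.range x) := by
  rw [← convexHull_smul, Set.smul_set_range]
  rfl

theorem convexHull_range_const_add (z : E) (x : ι → E) :
    convexHull ℝ (Set.range (Function.const ι z + x)) = z +ᵥ convexHull ℝ (Set.range x) := by
  rw [← convexHull_vadd, Set.vadd_set_range]
  rfl

theorem eq_zero_of_add_mem_of_sub_mem_of_mem_extremePoints {A : Set E} {p d : E}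
    (hp : p ∈ A.extremePoints ℝ) (hadd : p + d ∈ A) (hsub : p - d ∈ A) : d = 0 := by
  have hmid : p ∈ openSegment ℝ (p + d) (p - d) :=
    ⟨1 / 2, 1 / 2, by norm_num, by norm_num, by norm_num, by module⟩
  exact add_eq_left.1 (hp.2 hadd hsub hmid)

theorem smul_mem_extremePoints_smul {A : Set E} {p : E} {t : ℝ} (ht : t ≠ 0)
    (hp : p ∈ A.extremePoints ℝ) : t • p ∈ (t • A).extremePoints ℝ :=
  (image_extremePoints (𝕜 := ℝ) (LinearEquiv.smulOfNeZero ℝ E t ht) A).subset ⟨p, hp, rfl⟩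

variable [TopologicalSpace E] [IsTopologicalAddGroup E] [ContinuousSMul ℝ E]
  [LocallyConvexSpace ℝ E] [T2Space E]

theorem convexHull_extremePoints_convexHull {S : Set E} (hS : S.Finite) :
    convexHull ℝ ((convexHull ℝ S).extremePoints ℝ) = convexHull ℝ S := by
  have hsub : (convexHull ℝ S).extremePoints ℝ ⊆ S := extremePoints_convexHull_subset
  have hclosed := (hS.subset hsub).isClosed_convexHull ℝ
  rw [← hclosed.closure_eq,
    closure_convexHull_extremePoints (hS.isCompact_convexHull ℝ) (convex_convexHull ℝ S)]

theorem mem_convexHull_range_iff [Finite ι] {x : ι → E} {p : E} :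
    p ∈ convexHull ℝ (Set.range x) ↔ ∀ f : StrongDual ℝ E, ∃ v, f p ≤ f (x v) := by
  refine ⟨fun hp f => ?_, fun h => ?_⟩
  · simpa using (f.toLinearMap.convexOn convex_univ).exists_ge_of_mem_convexHull
      (Set.subset_univ _) hp
  · by_contra hp
    obtain ⟨f, c, hlt, hc⟩ := geometric_hahn_banach_closed_point (convex_convexHull ℝ _)
      ((Set.finite_range x).isClosed_convexHull ℝ) hp
    obtain ⟨v, hv⟩ := h f
    exact (hc.trans_le hv).not_gt (hlt _ (subset_convexHull ℝ _ ⟨v, rfl⟩))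

end ConvexHull

section DeformationCone

variable {ι E : Type*} [AddCommGroup E] [Module ℝ E] [TopologicalSpace E]

/-- The cone of families `x` such that every continuous linear functional maximized over the
family `u` at the index `v` is maximized over `x` at `v`. When the `u v` are the vertices of a
polytope, this says that the normal fan of that polytope refines the one of the hull of `x`, with
`x v` the point of that hull corresponding to the vertex `u v`. -/
def supportCone (u : ι → E) : PointedCone ℝ (ι → E) where
  carrier := {x | ∀ (f : StrongDual ℝ E) (v : ι), (∀ w, f (u w) ≤ f (u v)) →
    ∀ w, f (x w) ≤ f (x v)}
  zero_mem' := by simp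
  add_mem' := fun hx hy f v hv w => by simpa using add_le_add (hx f v hv w) (hy f v hv w)
  smul_mem' := fun c x hx f v hv w => by
    change f (c.1 • x w) ≤ f (c.1 • x v)
    simpa only [map_smul] using smul_le_smul_of_nonneg_left (hx f v hv w) c.2

/-- The linear space of families that, in the preorder defined by `supportCone u`, are bounded
above and below by multiples of `u`. -/
def deformationSpace (u : ι → E) : Submodule ℝ (ι → E) where
  carrier := {x | ∃ t : ℝ, t • u + x ∈ supportCone u ∧ t • u - x ∈ supportCone u}
  zero_mem' := ⟨0, by simp⟩
  add_mem' := by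
    rintro x y ⟨s, hxs, hxs'⟩ ⟨t, hyt, hyt'⟩
    refine ⟨s + t, ?_, ?_⟩
    · convert add_mem hxs hyt using 1
      module
    · convert add_mem hxs' hyt' using 1
      module
  smul_mem' := by
    rintro c x ⟨t, hadd, hsub⟩
    obtain hc | hc := le_total 0 c
    · refine ⟨c * t, ?_, ?_⟩
      · simpa [mul_smul] using (supportCone u).smul_mem hc hadd
      · simpa [mul_smul, smul_sub] using (supportCone u).smul_mem hc hsub
    · refine ⟨-c * t, ?_, ?_⟩
      · convert (supportCone u).smul_mem (neg_nonneg.2 hc) hsub using 1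
        module
      · convert (supportCone u).smul_mem (neg_nonneg.2 hc) hadd using 1
        module

/-- The families whose hulls are the Minkowski summands of dilates of the hull of `u`, when the
`u v` are the vertices of that hull. -/
def deformationCone (u : ι → E) : PointedCone ℝ (ι → E) :=
  supportCone u ⊓ PointedCone.ofSubmodule (deformationSpace u)

variable {u x : ι → E}

theorem self_mem_supportCone (u : ι → E) : u ∈ supportCone u := fun _ _ hv => hv

theorem const_mem_supportCone (u : ι → E) (z : E) : Function.const ι z ∈ supportCone u :=
  fun _ _ _ _ => le_rfl

theorem sub_const_mem_supportCone (hx : x ∈ supportCone u) (z : E) :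
    x - Function.const ι z ∈ supportCone u :=
  sub_eq_add_neg x _ ▸ add_mem hx (const_mem_supportCone u (-z))

theorem mem_deformationCone_of_smul_sub_mem {t : ℝ} (hx : x ∈ supportCone u)
    (htx : t • u - x ∈ supportCone u) : x ∈ deformationCone u := by
  refine ⟨hx, t, ?_, htx⟩
  convert add_mem htx (add_mem hx hx) using 1
  module

theorem self_mem_deformationCone (u : ι → E) : u ∈ deformationCone u :=
  mem_deformationCone_of_smul_sub_mem (t := 1) (self_mem_supportCone u) (by simp)

theorem const_mem_deformationCone (u : ι → E) (z : E) :
    Function.const ι z ∈ deformationCone u :=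
  mem_deformationCone_of_smul_sub_mem (t := 0) (const_mem_supportCone u z)
    (by rw [zero_smul, zero_sub]; exact const_mem_supportCone u (-z))

open Filter in
theorem eventually_smul_add_mem_supportCone (hx : x ∈ deformationSpace u) :
    ∀ᶠ t : ℝ in atTop, t • u + x ∈ supportCone u := by
  obtain ⟨s, hs, -⟩ := hx
  filter_upwards [eventually_ge_atTop s] with t hst
  convert add_mem hs ((supportCone u).smul_mem (sub_nonneg.2 hst) (self_mem_supportCone u)) using 1
  module

open Filter in
theorem eventually_smul_sub_mem_supportCone (hx : x ∈ deformationSpace u) :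
    ∀ᶠ t : ℝ in atTop, t • u - x ∈ supportCone u := by
  simpa only [sub_eq_add_neg] using eventually_smul_add_mem_supportCone (neg_mem hx)

end DeformationCone

section Hull

variable {ι κ E : Type*} [Finite ι] [AddCommGroup E] [Module ℝ E]
  [TopologicalSpace E] [IsTopologicalAddGroup E] [ContinuousSMul ℝ E] [LocallyConvexSpace ℝ E]
  [T2Space E] {u x y : ι → E}

theorem apply_le_of_mem_convexHull_range (hx : x ∈ supportCone u) {f : StrongDual ℝ E} {v : ι}
    (hv : ∀ w, f (u w) ≤ f (u v)) {p : E} (hp : p ∈ convexHull ℝ (Set.range x)) :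
    f p ≤ f (x v) := by
  obtain ⟨w, hw⟩ := mem_convexHull_range_iff.1 hp f
  exact hw.trans (hx f v hv w)

theorem apply_le_of_add_subset_smul {A B : Set E} {t : ℝ} (ht : 0 ≤ t)
    (hAB : A + B ⊆ t • convexHull ℝ (Set.range u)) {f : StrongDual ℝ E} {v : ι}
    (hv : ∀ w, f (u w) ≤ f (u v)) {a b : E} (hb : b ∈ B) (hab : a + b = t • u v)
    {p : E} (hp : p ∈ A) : f p ≤ f a := by
  obtain ⟨q, hq, hqpb⟩ := hAB (Set.add_mem_add hp hb)
  have hfq : f q ≤ f (u v) := apply_le_of_mem_convexHull_range (self_mem_supportCone u) hv hq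
  refine le_of_add_le_add_right (a := f b) ?_
  calc f p + f b = t * f q := by simpa using congrArg f hqpb.symm
    _ ≤ t * f (u v) := mul_le_mul_of_nonneg_left hfq ht
    _ = f a + f b := by simpa using congrArg f hab.symm

variable [Nonempty ι]

theorem convexHull_range_add (hx : x ∈ supportCone u) (hy : y ∈ supportCone u) :
    convexHull ℝ (Set.range (x + y)) =
      convexHull ℝ (Set.range x) + convexHull ℝ (Set.range y) := by
  apply subset_antisymm
  · rw [← convexHull_add]
    apply convexHull_mono
    rintro _ ⟨v, rfl⟩
    exact Set.add_mem_add ⟨v, rfl⟩ ⟨v, rfl⟩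
  · rintro _ ⟨p, hp, q, hq, rfl⟩
    refine mem_convexHull_range_iff.2 fun f => ?_
    obtain ⟨v, hv⟩ := Finite.exists_max fun w => f (u w)
    refine ⟨v, ?_⟩
    simpa using add_le_add (apply_le_of_mem_convexHull_range hx hv hp)
      (apply_le_of_mem_convexHull_range hy hv hq)

theorem convexHull_range_sum_smul (s : Finset κ) {b : κ → ι → E}
    (hb : ∀ i, b i ∈ supportCone u) {c : κ → ℝ} (hc : ∀ i, 0 ≤ c i) :
    convexHull ℝ (Set.range (∑ i ∈ s, c i • b i)) =
      ∑ i ∈ s, c i • convexHull ℝ (Set.range (b i)) := by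
  classical
  have hcb (i : κ) : c i • b i ∈ supportCone u := (supportCone u).smul_mem (hc i) (hb i)
  induction s using Finset.induction_on with
  | empty =>
    rw [Finset.sum_empty, Finset.sum_empty, Pi.zero_def, Set.range_const, convexHull_singleton,
      Set.singleton_zero]
  | insert i s hi ih =>
    rw [Finset.sum_insert hi, Finset.sum_insert hi,
      convexHull_range_add (hcb i) (sum_mem fun j _ => hcb j), convexHull_range_smul, ih]

theorem convexHull_range_add_smul_sub {t : ℝ} (hx : x ∈ supportCone u)
    (htx : t • u - x ∈ supportCone u) :
    convexHull ℝ (Set.range x) + convexHull ℝ (Set.range (t • u - x)) =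
      t • convexHull ℝ (Set.range u) := by
  rw [← convexHull_range_add hx htx, add_sub_cancel, convexHull_range_smul]

theorem add_inv_smul_sub_mem_convexHull_range {t : ℝ} (ht : 0 < t) (hx : x ∈ supportCone u)
    (htx : t • u - x ∈ supportCone u) {v : ι} {p : E} (hp : p ∈ convexHull ℝ (Set.range x)) :
    u v + t⁻¹ • (p - x v) ∈ convexHull ℝ (Set.range u) := by
  have hmem := Set.add_mem_add hp
    (subset_convexHull ℝ _ (Set.mem_range_self (f := t • u - x) v))
  rw [convexHull_range_add_smul_sub hx htx, Set.mem_smul_set_iff_inv_smul_mem₀ ht.ne'] at hmem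
  convert hmem using 1
  simp only [Pi.sub_apply, Pi.smul_apply]
  match_scalars <;> field_simp

-- For large `t` both `u v + t⁻¹ • (y v - x v)` and `u v - t⁻¹ • (y v - x v)` lie in the hull of
-- `u`, whose vertex `u v` is their midpoint.
theorem eq_of_convexHull_range_eq (hu : ∀ v, u v ∈ (convexHull ℝ (Set.range u)).extremePoints ℝ)
    (hx : x ∈ deformationCone u) (hy : y ∈ deformationCone u)
    (h : convexHull ℝ (Set.range x) = convexHull ℝ (Set.range y)) : x = y := by
  obtain ⟨t, htx, hty, ht⟩ := ((eventually_smul_sub_mem_supportCone hx.2).and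
    ((eventually_smul_sub_mem_supportCone hy.2).and (Filter.eventually_gt_atTop 0))).exists
  funext v
  have hxv : x v ∈ convexHull ℝ (Set.range y) := h ▸ subset_convexHull ℝ _ ⟨v, rfl⟩
  have hyv : y v ∈ convexHull ℝ (Set.range x) := h ▸ subset_convexHull ℝ _ ⟨v, rfl⟩
  have hzero := eq_zero_of_add_mem_of_sub_mem_of_mem_extremePoints (hu v)
    (add_inv_smul_sub_mem_convexHull_range ht hx.1 htx hyv)
    (by simpa only [← smul_neg, neg_sub, sub_eq_add_neg (u v)] using
      add_inv_smul_sub_mem_convexHull_range ht hy.1 hty hxv)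
  exact (sub_eq_zero.1 ((smul_eq_zero_iff_right (inv_ne_zero ht.ne')).1 hzero)).symm

theorem convexHull_range_add_sum_eq_vadd_iff [Fintype κ]
    (hu : ∀ v, u v ∈ (convexHull ℝ (Set.range u)).extremePoints ℝ)
    (hx : x ∈ deformationCone u) {b : κ → ι → E} (hb : ∀ i, b i ∈ deformationCone u)
    {c d : κ → ℝ} (hc : ∀ i, 0 ≤ c i) (hd : ∀ i, 0 ≤ d i) (z : E) :
    convexHull ℝ (Set.range x) + ∑ i, c i • convexHull ℝ (Set.range (b i)) =
        z +ᵥ ∑ i, d i • convexHull ℝ (Set.range (b i)) ↔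
      x + ∑ i, c i • b i = Function.const ι z + ∑ i, d i • b i := by
  have hsum {a : κ → ℝ} (ha : ∀ i, 0 ≤ a i) : ∑ i, a i • b i ∈ deformationCone u :=
    sum_mem fun i _ => (deformationCone u).smul_mem (ha i) (hb i)
  rw [← convexHull_range_sum_smul _ (fun i => (hb i).1) hc,
    ← convexHull_range_sum_smul _ (fun i => (hb i).1) hd,
    ← convexHull_range_add hx.1 (hsum hc).1, ← convexHull_range_const_add]
  exact ⟨eq_of_convexHull_range_eq hu (add_mem hx (hsum hc))
    (add_mem (const_mem_deformationCone u z) (hsum hd)), fun h => by rw [h]⟩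

theorem exists_mem_deformationCone_convexHull_range_eq
    (hu : ∀ v, u v ∈ (convexHull ℝ (Set.range u)).extremePoints ℝ) {S T : Set E} {t : ℝ}
    (ht : 0 < t) (hST : convexHull ℝ S + convexHull ℝ T = t • convexHull ℝ (Set.range u)) :
    ∃ x ∈ deformationCone u, (∀ v, x v ∈ S) ∧
      convexHull ℝ (Set.range x) = convexHull ℝ S := by
  have hdecomp (v : ι) : ∃ p ∈ S, ∃ q ∈ T, p + q = t • u v := by
    have hext := smul_mem_extremePoints_smul ht.ne' (hu v)
    rw [← hST, ← convexHull_add] at hext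
    exact Set.mem_add.1 (extremePoints_convexHull_subset hext)
  choose x hxS y hyT hxy using hdecomp
  have hxmem (v : ι) : x v ∈ convexHull ℝ S := subset_convexHull ℝ S (hxS v)
  have hymem (v : ι) : y v ∈ convexHull ℝ T := subset_convexHull ℝ T (hyT v)
  have hxmax {f : StrongDual ℝ E} {v : ι} (hv : ∀ w, f (u w) ≤ f (u v)) :
      ∀ p ∈ convexHull ℝ S, f p ≤ f (x v) := fun p hp =>
    apply_le_of_add_subset_smul ht.le hST.subset hv (hymem v) (hxy v) hp
  have hymax {f : StrongDual ℝ E} {v : ι} (hv : ∀ w, f (u w) ≤ f (u v)) :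
      ∀ q ∈ convexHull ℝ T, f q ≤ f (y v) := fun q hq =>
    apply_le_of_add_subset_smul ht.le ((add_comm _ _).trans hST).subset hv (hxmem v)
      ((add_comm _ _).trans (hxy v)) hq
  have hsub : t • u - x = y := sub_eq_iff_eq_add'.2 (funext fun v => (hxy v).symm)
  refine ⟨x, mem_deformationCone_of_smul_sub_mem (t := t) (fun f v hv w => hxmax hv _ (hxmem w))
    (hsub ▸ fun f v hv w => hymax hv _ (hymem w)), hxS, subset_antisymm ?_ fun p hp => ?_⟩
  · exact convexHull_mono (Set.range_subset_iff.2 hxS)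
  · refine mem_convexHull_range_iff.2 fun f => ?_
    obtain ⟨v, hv⟩ := Finite.exists_max fun w => f (u w)
    exact ⟨v, hxmax hv p hp⟩

end Hull

section Lattice

variable {ι E : Type*} [AddCommGroup E] [Module ℝ E]

/-- A polytope whose vertices lie in the subgroup `L` of the real vector space `E`. As the
subgroup need not be discrete, it is given as a `ℤ`-submodule rather than as a lattice. -/
def IsPolytopeOver (L : Submodule ℤ E) (P : Set E) : Prop :=
  ∃ S ⊆ (L : Set E), S.Finite ∧ S.Nonempty ∧ P = convexHull ℝ S

/-- `Q` is a Minkowski summand of a positive integer dilate of `P`, with a complement that is a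
polytope over `L`. -/
def IsDeformationOver (L : Submodule ℤ E) (P Q : Set E) : Prop :=
  ∃ m : ℕ, 1 ≤ m ∧ ∃ R : Set E, IsPolytopeOver L R ∧ Q + R = (m : ℝ) • P

variable {L : Submodule ℤ E} {u x : ι → E}

theorem isPolytopeOver_convexHull_range [Finite ι] [Nonempty ι] (hx : ∀ v, x v ∈ L) :
    IsPolytopeOver L (convexHull ℝ (Set.range x)) :=
  ⟨Set.range x, Set.range_subset_iff.2 hx, Set.finite_range x, Set.range_nonempty x, rfl⟩

theorem add_sum_sub_smul_eq_add_sum_smul_iff {κ : Type*} [Fintype κ] (p y : κ → ℤ) (b : κ → E)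
    (a c : E) : a + ∑ i, ((p i - y i : ℤ) : ℝ) • b i = c + ∑ i, (p i : ℝ) • b i ↔
      a = c + ∑ i, y i • b i := by
  simp only [Int.cast_smul_eq_zsmul, sub_smul, Finset.sum_sub_distrib]
  rw [add_sub_left_comm, add_comm c, add_comm c, ← sub_eq_iff_eq_add', add_sub_cancel_left,
    sub_eq_iff_eq_add']

variable [TopologicalSpace E]

/-- The `L`-valued families in `deformationSpace u` that vanish at the index `o`; the last
condition selects one representative of each class of families up to translation. -/
def basedDeformations (L : Submodule ℤ E) (u : ι → E) (o : ι) : Submodule ℤ (ι → E) :=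
  (deformationSpace u).restrictScalars ℤ ⊓ Submodule.pi Set.univ (fun _ => L) ⊓
    LinearMap.ker (LinearMap.proj o)

theorem mem_basedDeformations {o : ι} :
    x ∈ basedDeformations L u o ↔ x ∈ deformationSpace u ∧ (∀ v, x v ∈ L) ∧ x o = 0 := by
  simp [basedDeformations, and_assoc]

theorem sub_const_mem_basedDeformations (hx : x ∈ deformationSpace u) (hxL : ∀ v, x v ∈ L)
    (o : ι) : x - Function.const ι (x o) ∈ basedDeformations L u o :=
  mem_basedDeformations.2 ⟨sub_mem hx (const_mem_deformationCone u (x o)).2,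
    fun v => sub_mem (hxL v) (hxL o), sub_self _⟩

theorem finite_basedDeformations [Finite ι] [Module.Finite ℤ L] (o : ι) :
    Module.Finite ℤ (basedDeformations L u o) := by
  have hpi : (Submodule.pi Set.univ fun _ : ι => L).FG :=
    Submodule.fg_pi fun _ => Module.Finite.iff_fg.1 inferInstance
  exact Module.Finite.iff_fg.2 (hpi.of_le (inf_le_left.trans inf_le_right))

theorem exists_basis_basedDeformations [Finite ι] [Module.Finite ℤ L] (huL : ∀ v, u v ∈ L)
    (o : ι) : ∃ (r : ℕ) (b : Module.Basis (Fin r) ℤ (basedDeformations L u o)),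
      ∀ i, (b i : ι → E) ∈ deformationCone u := by
  have := finite_basedDeformations (L := L) (u := u) o
  have : Module.IsTorsionFree ℤ E := .trans_faithfulSMul ℤ ℝ E
  have : Module.Free ℤ (basedDeformations L u o) := Module.free_of_finite_type_torsion_free'
  let e : basedDeformations L u o :=
    ⟨_, sub_const_mem_basedDeformations (self_mem_deformationCone u).2 huL o⟩
  let M : AddSubmonoid (basedDeformations L u o) :=
    (supportCone u).toAddSubmonoid.comap (basedDeformations L u o).subtype.toAddMonoidHom
  have hmem {x : basedDeformations L u o} : x ∈ M ↔ (x : ι → E) ∈ supportCone u := Iff.rfl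
  have hsat : M.NSMulSaturated := fun k x hkx => or_iff_not_imp_left.2 fun hk => by
    have hinv : (0 : ℝ) ≤ (k : ℝ)⁻¹ := by positivity
    have hk' : (k : ℝ) ≠ 0 := Nat.cast_ne_zero.2 hk
    simpa [hmem, ← Nat.cast_smul_eq_nsmul ℝ, inv_smul_smul₀ hk'] using
      (supportCone u).smul_mem hinv hkx
  have he : e ∈ M := sub_const_mem_supportCone (self_mem_supportCone u) (u o)
  have hunit (x : basedDeformations L u o) : ∃ m : ℕ, m • e + x ∈ M := by
    obtain ⟨m, hm⟩ := (tendsto_natCast_atTop_atTop.eventually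
      (eventually_smul_add_mem_supportCone (mem_basedDeformations.1 x.2).1)).exists
    have heq : ((m • e + x : basedDeformations L u o) : ι → E) =
        (m : ℝ) • u + x - Function.const ι (m • u o) := by
      funext v
      simp [e, Nat.cast_smul_eq_nsmul, smul_sub, sub_add_eq_add_sub]
    exact ⟨m, hmem.2 (heq ▸ sub_const_mem_supportCone hm _)⟩
  obtain ⟨r, b, hb⟩ := exists_basis_mem_of_nsmulSaturated hsat he hunit
  exact ⟨r, b, fun i => ⟨hb i, (mem_basedDeformations.1 (b i).2).1⟩⟩

theorem existsUnique_translate_add_sum_zsmul {r : ℕ} {o : ι}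
    (b : Module.Basis (Fin r) ℤ (basedDeformations L u o)) (hx : x ∈ deformationSpace u)
    (hxL : ∀ v, x v ∈ L) :
    ∃! y : Fin r → ℤ, ∃ z ∈ L, x = Function.const ι z + ∑ i, y i • (b i : ι → E) := by
  let x₀ : basedDeformations L u o := ⟨_, sub_const_mem_basedDeformations hx hxL o⟩
  refine ⟨b.repr x₀, ⟨x o, hxL o, ?_⟩, ?_⟩
  · have hsum := congrArg Subtype.val (b.sum_repr x₀)
    push_cast at hsum
    rw [hsum, add_sub_cancel]
  · rintro y ⟨z, -, hz⟩
    have hzo : x o = z := by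
      have := (mem_basedDeformations.1 (∑ i, y i • b i).2).2.2
      push_cast at this
      simpa [this] using congrFun hz o
    have hx₀ : x₀ = ∑ i, y i • b i := by
      apply Subtype.ext
      push_cast
      exact sub_eq_iff_eq_add'.2 (hzo ▸ hz)
    rw [hx₀, b.repr_sum_self]

variable [IsTopologicalAddGroup E] [ContinuousSMul ℝ E] [LocallyConvexSpace ℝ E] [T2Space E]

theorem isDeformationOver_convexHull_range [Finite ι] [Nonempty ι] (huL : ∀ v, u v ∈ L)
    (hxL : ∀ v, x v ∈ L) (hx : x ∈ deformationCone u) :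
    IsDeformationOver L (convexHull ℝ (Set.range u)) (convexHull ℝ (Set.range x)) := by
  obtain ⟨m, hmx, hm⟩ := ((tendsto_natCast_atTop_atTop.eventually
    (eventually_smul_sub_mem_supportCone hx.2)).and (Filter.eventually_ge_atTop 1)).exists
  refine ⟨m, hm, _, isPolytopeOver_convexHull_range fun v => ?_,
    convexHull_range_add_smul_sub hx.1 hmx⟩
  simpa [Nat.cast_smul_eq_nsmul] using sub_mem (nsmul_mem (huL v) m) (hxL v)

theorem IsPolytopeOver.exists_vertices {P : Set E} (hP : IsPolytopeOver L P) :
    ∃ V ⊆ (L : Set E), V.Finite ∧ V.Nonempty ∧ P = convexHull ℝ V ∧ V ⊆ P.extremePoints ℝ := by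
  obtain ⟨S, hSL, hS, hne, rfl⟩ := hP
  have hsub : (convexHull ℝ S).extremePoints ℝ ⊆ S := extremePoints_convexHull_subset
  exact ⟨_, hsub.trans hSL, hS.subset hsub,
    (hS.isCompact_convexHull ℝ).extremePoints_nonempty hne.convexHull,
    (convexHull_extremePoints_convexHull hS).symm, subset_rfl⟩

theorem polytope_factorization_basis_general (L : Submodule ℤ E) [Module.Finite ℤ L]
    (P : Set E) (hP : IsPolytopeOver L P) :
    ∃ (r : ℕ) (B : Fin r → Set E),
      (∀ i, IsPolytopeOver L (B i)) ∧
      (∀ i, IsDeformationOver L P (B i)) ∧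
      (∀ Q : Set E, IsPolytopeOver L Q → IsDeformationOver L P Q →
        ∃! y : Fin r → ℤ, ∃ z ∈ L,
          Q + ∑ i, ((max (y i) 0 - y i : ℤ) : ℝ) • B i
            = z +ᵥ ∑ i, ((max (y i) 0 : ℤ) : ℝ) • B i) := by
  obtain ⟨V, hVL, hV, hne, rfl, hext⟩ := hP.exists_vertices
  have := hV.to_subtype
  have := hne.to_subtype
  let u : V → E := Subtype.val
  have huL (v : V) : u v ∈ L := hVL v.2
  rw [← Subtype.range_val (s := V)] at hext ⊢
  have hu (v : V) : u v ∈ (convexHull ℝ (Set.range u)).extremePoints ℝ := hext ⟨v, rfl⟩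
  obtain ⟨r, b, hb⟩ := exists_basis_basedDeformations huL (Classical.arbitrary V)
  have hbL (i : Fin r) (v : V) : (b i : V → E) v ∈ L := (mem_basedDeformations.1 (b i).2).2.1 v
  refine ⟨r, fun i => convexHull ℝ (Set.range (b i : V → E)),
    fun i => isPolytopeOver_convexHull_range (hbL i),
    fun i => isDeformationOver_convexHull_range huL (hbL i) (hb i), ?_⟩
  rintro _ ⟨S, hSL, -, -, rfl⟩ ⟨m, hm, _, ⟨T, -, -, -, rfl⟩, hST⟩
  obtain ⟨x, hx, hxS, hxQ⟩ :=
    exists_mem_deformationCone_convexHull_range_eq hu (by positivity) hST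
  have hiff (y : Fin r → ℤ) (z : E) := (convexHull_range_add_sum_eq_vadd_iff hu hx hb
    (c := fun i => ((max (y i) 0 - y i : ℤ) : ℝ)) (d := fun i => ((max (y i) 0 : ℤ) : ℝ))
    (fun i => Int.cast_nonneg (sub_nonneg.2 (le_max_left _ _)))
    (fun i => Int.cast_nonneg (le_max_right _ _)) z).trans
    (add_sum_sub_smul_eq_add_sum_smul_iff _ y _ _ _)
  simpa only [← hxQ, hiff] using
    existsUnique_translate_add_sum_zsmul b hx.2 fun v => hSL (hxS v)

end Lattice

section IntegerLattice

/-- The subgroup `ℤⁿ` of `ℝⁿ`. -/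
def integerLattice (n : ℕ) : Submodule ℤ (Fin n → ℝ) :=
  LinearMap.range ((Int.castAddHom ℝ).toIntLinearMap.compLeft (Fin n))

theorem mem_integerLattice {n : ℕ} {z : Fin n → ℝ} :
    z ∈ integerLattice n ↔ ∃ a, intToReal a = z :=
  Iff.rfl

instance (n : ℕ) : Module.Finite ℤ (integerLattice n) :=
  inferInstanceAs (Module.Finite ℤ (LinearMap.range _))

theorem isLatticePolytope_iff_isPolytopeOver {n : ℕ} {P : Set (Fin n → ℝ)} :
    IsLatticePolytope P ↔ IsPolytopeOver (integerLattice n) P := by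
  constructor
  · rintro ⟨S, hS, rfl⟩
    exact ⟨_, Set.image_subset_iff.2 fun a _ => ⟨a, rfl⟩, S.finite_toSet.image _,
      hS.to_set.image _, rfl⟩
  · rintro ⟨S, hSL, hS, hne, rfl⟩
    classical
    lift S to Finset (Fin n → ℝ) using hS
    obtain ⟨T, -, rfl⟩ := Finset.subset_set_image_iff.1 (hSL.trans Set.image_univ.superset)
    rw [Finset.coe_image] at hne ⊢
    exact ⟨T, hne.of_image, rfl⟩

theorem isDeformation_iff_isDeformationOver {n : ℕ} {P Q : Set (Fin n → ℝ)} :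
    IsDeformation P Q ↔ IsDeformationOver (integerLattice n) P Q := by
  simp only [IsDeformation, IsDeformationOver, isLatticePolytope_iff_isPolytopeOver]

end IntegerLattice

/-- Every lattice polytope `P` admits a finite polytope factorization basis
`B₁, …, B_r` of lattice polytopes, each a deformation of `P`, such that every lattice
polytope `Q` deforming `P` has a unique signed Minkowski expansion
`Q + Σ yᵢ⁻ Bᵢ = z + Σ yᵢ⁺ Bᵢ` up to a lattice translation `z ∈ ℤⁿ`. -/
theorem polytope_factorization_basis (n : ℕ) (hn : 1 ≤ n)
    (P : Set (Fin n → ℝ)) (hP : IsLatticePolytope P) :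
    ∃ (r : ℕ) (B : Fin r → Set (Fin n → ℝ)),
      (∀ i, IsLatticePolytope (B i)) ∧
      (∀ i, IsDeformation P (B i)) ∧
      (∀ Q : Set (Fin n → ℝ), IsLatticePolytope Q → IsDeformation P Q →
        ∃! y : Fin r → ℤ, ∃ z : Fin n → ℤ,
          Q + ∑ i, ((max (y i) 0 - y i : ℤ) : ℝ) • B i
            = intToReal z +ᵥ ∑ i, ((max (y i) 0 : ℤ) : ℝ) • B i) := by
  simpa only [isLatticePolytope_iff_isPolytopeOver, isDeformation_iff_isDeformationOver,
    mem_integerLattice, exists_exists_eq_and] using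
    polytope_factorization_basis_general (integerLattice n) P
      (isLatticePolytope_iff_isPolytopeOver.1 hP)
end

section
/- Let n ≥ 1, let ℓ : {1,…,n+1} → {1,…,n} be a surjection, and let {p, q} with p ≠ q be its unique two-element fiber. Define C(ℓ) = {x ∈ ℝ^{n+1} : for all i, j, if ℓ(i) < ℓ(j) then x_i > x_j, and if ℓ(i) = ℓ(j) then x_i = x_j}. Let I ⊆ {1,…,n+1} with |I| ≥ 2, and for r ≠ s in I define C_{rs} = {x ∈ ℝ^{n+1} : x_r = x_s and x_t ≤ x_r for all t ∈ I}. Then there exist r ≠ s in I with C(ℓ) ⊆ C_{rs} if and only if p ∈ I, q ∈ I, and ℓ(p) ≤ ℓ(t) for all t ∈ I. -/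
/-!
All points of the braid cone `C(ℓ)` order their coordinates as `ℓ` does, reversed. Hence a single
point of `C(ℓ)` lies in `C_{rs}` iff `ℓ r = ℓ s` is the least value of `ℓ` on `I`, a condition on
`ℓ` alone; so `C(ℓ)`, being nonempty, is contained in `C_{rs}` iff this condition holds. As `{p, q}`
is the only fiber with more than one element, `ℓ r = ℓ s` with `r ≠ s` means `{r, s} = {p, q}`.
-/

section Fibers

variable {α β : Type*} {f : α → β} {p q : α}

theorem image_compl_singleton_eq_univ_of_surjective (hf : Function.Surjective f) (hpq : p ≠ q)
    (hfpq : f p = f q) : f '' {p}ᶜ = Set.univ := by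
  refine Set.eq_univ_of_forall fun y => ?_
  obtain ⟨i, rfl⟩ := hf y
  by_cases hi : i = p
  · exact ⟨q, hpq.symm, by rw [hi, hfpq]⟩
  · exact ⟨i, hi, rfl⟩

theorem injOn_compl_singleton_of_surjective [Finite α] (hcard : Nat.card α ≤ Nat.card β + 1)
    (hf : Function.Surjective f) (hpq : p ≠ q) (hfpq : f p = f q) : Set.InjOn f {p}ᶜ := by
  refine Set.injOn_of_ncard_image_eq (le_antisymm Set.ncard_image_le ?_)
  rw [image_compl_singleton_eq_univ_of_surjective hf hpq hfpq, Set.ncard_compl,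
    Set.ncard_singleton, Set.ncard_univ]
  lia

theorem eq_and_eq_or_eq_and_eq_of_injOn_compl_singleton (hinj : Set.InjOn f {p}ᶜ) (hpq : p ≠ q)
    (hfpq : f p = f q) {r s : α} (hrs : r ≠ s) (hfrs : f r = f s) :
    r = p ∧ s = q ∨ r = q ∧ s = p := by
  by_cases hrp : r = p
  · subst hrp
    exact .inl ⟨rfl, hinj hrs.symm hpq.symm (hfrs.symm.trans hfpq)⟩
  · by_cases hsp : s = p
    · subst hsp
      exact .inr ⟨hinj hrs hpq.symm (hfrs.trans hfpq), rfl⟩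
    · exact absurd (hinj hrp hsp hfrs) hrs

end Fibers

section Cones

variable {ι β R : Type*}

/-- The relatively open cone `C(ℓ)` of the braid arrangement attached to the ordered partition of
`ι` into the fibers of `ℓ`. The order is reversed: coordinates decrease as `ℓ` increases. -/
def braidCone (R : Type*) [Preorder β] [Preorder R] (ℓ : ι → β) : Set (ι → R) :=
  {x | ∀ i j, (ℓ i < ℓ j → x i > x j) ∧ (ℓ i = ℓ j → x i = x j)}

/-- The cone `C_{rs}` of the normal fan of the simplex `Δ_I = conv {e_i : i ∈ I}`: the functionals
attaining their maximum over `Δ_I` at both vertices `e_r` and `e_s`, for `r, s ∈ I`. -/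
def simplexNormalCone (R : Type*) [Preorder R] (I : Set ι) (r s : ι) : Set (ι → R) :=
  {x | x r = x s ∧ ∀ t ∈ I, x t ≤ x r}

theorem comp_mem_braidCone [Preorder β] [Preorder R] {g : β → R} (hg : StrictAnti g) (ℓ : ι → β) :
    g ∘ ℓ ∈ braidCone R ℓ :=
  fun _ _ => ⟨fun h => hg h, congrArg g⟩

theorem braidCone_nonempty [LinearOrder β] [Countable β] [LinearOrder R] [DenselyOrdered R]
    [Nontrivial R] (ℓ : ι → β) : (braidCone R ℓ).Nonempty := by
  obtain ⟨g⟩ := Order.embedding_from_countable_to_dense β Rᵒᵈ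
  exact ⟨_, comp_mem_braidCone (g := OrderDual.ofDual ∘ g) g.strictMono ℓ⟩

variable [LinearOrder β] [Preorder R] {ℓ : ι → β} {x : ι → R} {i j : ι}

theorem apply_eq_iff_of_mem_braidCone (hx : x ∈ braidCone R ℓ) : x i = x j ↔ ℓ i = ℓ j := by
  refine ⟨fun h => ?_, (hx i j).2⟩
  by_contra hne
  rcases lt_or_gt_of_ne hne with hij | hji
  · exact ((hx i j).1 hij).ne' h
  · exact ((hx j i).1 hji).ne h

theorem apply_le_iff_of_mem_braidCone (hx : x ∈ braidCone R ℓ) : x i ≤ x j ↔ ℓ j ≤ ℓ i := by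
  refine ⟨fun h => not_lt.1 fun hij => ((hx i j).1 hij).not_ge h, fun h => ?_⟩
  rcases h.lt_or_eq with hji | hji
  · exact ((hx j i).1 hji).le
  · exact ((hx j i).2 hji).ge

theorem mem_simplexNormalCone_iff_of_mem_braidCone (hx : x ∈ braidCone R ℓ) {I : Set ι} {r s : ι} :
    x ∈ simplexNormalCone R I r s ↔ ℓ r = ℓ s ∧ ∀ t ∈ I, ℓ r ≤ ℓ t := by
  simp only [simplexNormalCone, Set.mem_ofPred_eq, apply_eq_iff_of_mem_braidCone hx,
    apply_le_iff_of_mem_braidCone hx]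

theorem braidCone_subset_simplexNormalCone_iff (hne : (braidCone R ℓ).Nonempty) {I : Set ι}
    {r s : ι} :
    braidCone R ℓ ⊆ simplexNormalCone R I r s ↔ ℓ r = ℓ s ∧ ∀ t ∈ I, ℓ r ≤ ℓ t := by
  obtain ⟨x, hx⟩ := hne
  exact ⟨fun hsub => (mem_simplexNormalCone_iff_of_mem_braidCone hx).1 (hsub hx),
    fun h _ hy => (mem_simplexNormalCone_iff_of_mem_braidCone hy).2 h⟩

theorem braid_cone_in_simplex_normal_cone_general (hne : (braidCone R ℓ).Nonempty) {p q : ι}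
    (hinj : Set.InjOn ℓ {p}ᶜ) (hpq : p ≠ q) (hfib : ℓ p = ℓ q) (I : Set ι) :
    (∃ r ∈ I, ∃ s ∈ I, r ≠ s ∧ braidCone R ℓ ⊆ simplexNormalCone R I r s) ↔
      p ∈ I ∧ q ∈ I ∧ ∀ t ∈ I, ℓ p ≤ ℓ t := by
  simp only [braidCone_subset_simplexNormalCone_iff hne]
  constructor
  · rintro ⟨r, hr, s, hs, hrs, hℓrs, hmin⟩
    obtain ⟨rfl, rfl⟩ | ⟨rfl, rfl⟩ :=
      eq_and_eq_or_eq_and_eq_of_injOn_compl_singleton hinj hpq hfib hrs hℓrs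
    · exact ⟨hr, hs, hmin⟩
    · exact ⟨hs, hr, hfib ▸ hmin⟩
  · rintro ⟨hp, hq, hmin⟩
    exact ⟨p, hp, q, hq, hpq, hfib, hmin⟩

end Cones

/-- The open braid cone `C(ℓ)` indexed by a surjection
`ℓ : [n+1] → [n]` with two-element fiber `{p, q}` is contained in some cone `C_{rs}`
(`r ≠ s` in `I`) of the normal fan of the simplex `Δ_I` iff `p ∈ I`, `q ∈ I` and
`ℓ p ≤ ℓ t` for all `t ∈ I`. -/
theorem braid_cone_in_simplex_normal_cone (n : ℕ) (hn : 1 ≤ n)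
    (ℓ : Fin (n + 1) → Fin n) (hℓ : Function.Surjective ℓ)
    (p q : Fin (n + 1)) (hpq : p ≠ q) (hfib : ℓ p = ℓ q)
    (I : Finset (Fin (n + 1))) (hI : 2 ≤ I.card) :
    (∃ r ∈ I, ∃ s ∈ I, r ≠ s ∧
      {x : Fin (n + 1) → ℝ | ∀ i j, (ℓ i < ℓ j → x i > x j) ∧ (ℓ i = ℓ j → x i = x j)} ⊆
        {x : Fin (n + 1) → ℝ | x r = x s ∧ ∀ t ∈ I, x t ≤ x r}) ↔
    (p ∈ I ∧ q ∈ I ∧ ∀ t ∈ I, ℓ p ≤ ℓ t) :=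
  braid_cone_in_simplex_normal_cone_general (braidCone_nonempty ℓ)
    (injOn_compl_singleton_of_surjective (by simp) hℓ hpq hfib) hpq hfib I
end

section
/- Let Δ = conv{(0,0), (1,0), (0,1)} ⊆ ℝ². If A and B are nonempty compact convex subsets of ℝ² with A + B = Δ (Minkowski sum), then there exist c ∈ ℝ with 0 ≤ c ≤ 1 and t ∈ ℝ² such that A = c·Δ + {t}, i.e. A is a translate of the dilate c·Δ. -/
open Pointwise

/-!
Write each vertex of a simplex `Δ = A + B` as `b j = u j + v j` with `u j ∈ A` and `v j ∈ B`.
The `i`-th barycentric coordinate is nonnegative on `Δ` and vanishes at `b j` for `j ≠ i`, so `u j`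
minimizes it on `A`. Hence `u j` and `u k` agree in every coordinate except the `j`-th and the
`k`-th, which makes the points `u j` the vertices of a homothetic copy `c • Δ + t`. This copy lies
in `A` by convexity, and it contains `A` because its facet inequalities hold on `A`.
-/

section AffineMap

variable {𝕜 E : Type*} [Field 𝕜] [LinearOrder 𝕜] [IsStrictOrderedRing 𝕜]
  [AddCommGroup E] [Module 𝕜 E]

theorem affineMap_le_iff_linear_sub_nonneg (f : E →ᵃ[𝕜] 𝕜) {x y : E} :
    f x ≤ f y ↔ 0 ≤ f.linear (y - x) := by
  rw [← vsub_eq_sub, f.linearMap_vsub, vsub_eq_sub, sub_nonneg]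

theorem affineMap_add_le_add_iff_right (f : E →ᵃ[𝕜] 𝕜) {x y : E} (v : E) :
    f (x + v) ≤ f (y + v) ↔ f x ≤ f y := by
  simp only [affineMap_le_iff_linear_sub_nonneg, add_sub_add_right_eq_sub]

theorem affineMap_smul_le_smul_iff_of_pos (f : E →ᵃ[𝕜] 𝕜) {c : 𝕜} (hc : 0 < c) {x y : E} :
    f (c • x) ≤ f (c • y) ↔ f x ≤ f y := by
  simp only [affineMap_le_iff_linear_sub_nonneg, ← smul_sub, map_smul, smul_eq_mul,
    mul_nonneg_iff_of_pos_left hc]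

end AffineMap

section Coordinates

variable {ι 𝕜 V P : Type*} [Finite ι] [Nontrivial ι] [Field 𝕜] [AddCommGroup V] [Module 𝕜 V]
  [AddTorsor V P]

theorem exists_forall_vsub_eq_smul_vsub_of_coord_eq (b : AffineBasis ι 𝕜 P) {u : ι → P}
    (hu : ∀ ⦃i j k⦄, i ≠ j → i ≠ k → b.coord i (u j) = b.coord i (u k)) :
    ∃ c : 𝕜, ∀ j k, u j -ᵥ u k = c • (b j -ᵥ b k) := by
  classical
  cases nonempty_fintype ι
  choose other h_other using fun i : ι ↦ exists_ne i
  let m : ι → 𝕜 := fun i ↦ b.coord i (u (other i))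
  let c : 𝕜 := 1 - ∑ i, m i
  have coord_of_ne {i j : ι} (hij : i ≠ j) : b.coord i (u j) = m i :=
    hu hij (h_other i).symm
  have coord_self (j : ι) : b.coord j (u j) = m j + c := by
    have h_sum : b.coord j (u j) - m j = ∑ i, (b.coord i (u j) - m i) :=
      (Fintype.sum_eq_single j fun i hij ↦ sub_eq_zero.2 (coord_of_ne hij)).symm
    rw [Finset.sum_sub_distrib, b.sum_coord_apply_eq_one] at h_sum
    exact eq_add_of_sub_eq' h_sum
  have coord_eq (i j : ι) : b.coord i (u j) = m i + c * b.coord i (b j) := by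
    obtain rfl | hij := eq_or_ne i j
    · rw [coord_self, b.coord_apply_eq, mul_one]
    · rw [coord_of_ne hij, b.coord_apply_ne hij, mul_zero, add_zero]
  refine ⟨c, fun j k ↦ (eq_vadd_iff_vsub_eq _ _ _).1 (b.ext_elem fun i ↦ ?_)⟩
  simp only [AffineMap.map_vadd, map_smul, AffineMap.linearMap_vsub, coord_eq, smul_eq_mul,
    vsub_eq_sub, vadd_eq_add]
  ring

end Coordinates

section Simplex

variable {ι 𝕜 E : Type*} [Field 𝕜] [LinearOrder 𝕜] [IsStrictOrderedRing 𝕜]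
  [AddCommGroup E] [Module 𝕜 E]

theorem smul_convexHull_add_singleton_subset {s A : Set E} (hA : Convex 𝕜 A) {c : 𝕜} {t : E}
    (h : ∀ x ∈ s, c • x + t ∈ A) : c • convexHull 𝕜 s + {t} ⊆ A := by
  rw [← convexHull_smul, ← convexHull_singleton (𝕜 := 𝕜) t, ← convexHull_add]
  refine convexHull_min ?_ hA
  rintro _ ⟨_, ⟨x, hx, rfl⟩, _, rfl, rfl⟩
  exact h x hx

theorem coord_le_coord_of_add_eq_vertex (b : AffineBasis ι 𝕜 E) {A B : Set E}
    (h : A + B ⊆ convexHull 𝕜 (Set.range b)) {x u v : E} (hx : x ∈ A) (hv : v ∈ B) {i j : ι}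
    (huv : u + v = b j) (hij : i ≠ j) : b.coord i u ≤ b.coord i x := by
  rw [← affineMap_add_le_add_iff_right _ v, huv, b.coord_apply_ne hij]
  rw [b.convexHull_eq_nonneg_coord] at h
  exact h (Set.add_mem_add hx hv) i

theorem mem_Icc_of_lineMap_mem_convexHull (b : AffineBasis ι 𝕜 E) {j k : ι} (hjk : j ≠ k) {c : 𝕜}
    (h : AffineMap.lineMap (b k) (b j) c ∈ convexHull 𝕜 (Set.range b)) : c ∈ Set.Icc 0 1 := by
  rw [b.convexHull_eq_nonneg_coord] at h
  constructor
  · have hj := h j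
    rwa [AffineMap.apply_lineMap, b.coord_apply_ne hjk, b.coord_apply_eq,
      AffineMap.lineMap_apply_ring, mul_zero, zero_add, mul_one] at hj
  · have hk := h k
    rwa [AffineMap.apply_lineMap, b.coord_apply_eq, b.coord_apply_ne hjk.symm,
      AffineMap.lineMap_apply_ring, mul_zero, add_zero, mul_one, sub_nonneg] at hk

theorem mem_smul_convexHull_of_coord_le [Finite ι] [Nontrivial ι] (b : AffineBasis ι 𝕜 E) {c : 𝕜}
    (hc : 0 ≤ c) {x : E} (hx : ∀ ⦃i j⦄, i ≠ j → b.coord i (c • b j) ≤ b.coord i x) :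
    x ∈ c • convexHull 𝕜 (Set.range b) := by
  cases nonempty_fintype ι
  obtain rfl | hc := hc.eq_or_lt
  · have h_le (i : ι) : b.coord i 0 ≤ b.coord i x := by
      obtain ⟨j, hji⟩ := exists_ne i
      simpa only [zero_smul] using hx hji.symm
    have h_sum : ∑ i, b.coord i 0 = ∑ i, b.coord i x := by
      simp only [b.sum_coord_apply_eq_one]
    have h_eq : 0 = x := b.ext_elem fun i ↦
      (Finset.sum_eq_sum_iff_of_le fun i _ ↦ h_le i).1 h_sum i (Finset.mem_univ i)
    rw [Set.zero_smul_set (Set.range_nonempty b).convexHull, ← h_eq]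
    exact Set.mem_zero.2 rfl
  · obtain ⟨y, rfl⟩ : ∃ y, c • y = x := ⟨c⁻¹ • x, smul_inv_smul₀ hc.ne' x⟩
    refine Set.smul_mem_smul_set ?_
    rw [b.convexHull_eq_nonneg_coord]
    intro i
    obtain ⟨j, hji⟩ := exists_ne i
    rw [← b.coord_apply_ne hji.symm]
    exact (affineMap_smul_le_smul_iff_of_pos _ hc).1 (hx hji.symm)

theorem exists_homothetic_vertices_of_add_eq_convexHull [Finite ι] [Nontrivial ι]
    (b : AffineBasis ι 𝕜 E) {A B : Set E} (h : A + B = convexHull 𝕜 (Set.range b)) :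
    ∃ c ∈ Set.Icc (0 : 𝕜) 1, ∃ t : E, (∀ j, c • b j + t ∈ A) ∧
      ∀ x ∈ A, ∀ ⦃i j⦄, i ≠ j → b.coord i (c • b j + t) ≤ b.coord i x := by
  have h_vertex (j : ι) : ∃ u ∈ A, ∃ v ∈ B, u + v = b j :=
    Set.mem_add.1 (h ▸ subset_convexHull 𝕜 _ (Set.mem_range_self j))
  choose u hu v hv huv using h_vertex
  have h_min {x : E} (hx : x ∈ A) {i j : ι} (hij : i ≠ j) : b.coord i (u j) ≤ b.coord i x :=
    coord_le_coord_of_add_eq_vertex b h.subset hx (hv j) (huv j) hij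
  obtain ⟨c, hc⟩ := exists_forall_vsub_eq_smul_vsub_of_coord_eq b (u := u) fun i j k hij hik ↦
    (h_min (hu k) hij).antisymm (h_min (hu j) hik)
  simp only [vsub_eq_sub] at hc
  obtain ⟨j, k, hjk⟩ := exists_pair_ne ι
  have h_lineMap : AffineMap.lineMap (b k) (b j) c = u j + v k := by
    rw [AffineMap.lineMap_apply, vsub_eq_sub, ← hc, ← huv k, vadd_eq_add]
    abel
  have hc_mem : c ∈ Set.Icc 0 1 := mem_Icc_of_lineMap_mem_convexHull b hjk
    (h_lineMap ▸ h ▸ Set.add_mem_add (hu j) (hv k))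
  have h_homothetic (i : ι) : c • b i + (u k - c • b k) = u i := by
    rw [← add_sub_assoc, add_sub_right_comm, ← smul_sub, ← hc, sub_add_cancel]
  refine ⟨c, hc_mem, u k - c • b k, fun i ↦ ?_, fun x hx i j hij ↦ ?_⟩ <;> rw [h_homothetic]
  · exact hu i
  · exact h_min hx hij

theorem standard_triangle_indecomposable_general [Finite ι] (b : AffineBasis ι 𝕜 E) {A B : Set E}
    (hA : Convex 𝕜 A) (h : A + B = convexHull 𝕜 (Set.range b)) :
    ∃ c : 𝕜, 0 ≤ c ∧ c ≤ 1 ∧ ∃ t : E, A = c • convexHull 𝕜 (Set.range b) + {t} := by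
  have : Nonempty ι := b.nonempty
  have h_nonempty : (convexHull 𝕜 (Set.range b)).Nonempty := (Set.range_nonempty b).convexHull
  cases subsingleton_or_nontrivial ι
  · have : Subsingleton E := AffineSubspace.subsingleton_of_subsingleton_span_eq_top
      (Set.subsingleton_range b) b.tot
    refine ⟨0, le_rfl, zero_le_one, 0, ?_⟩
    rw [Set.zero_smul_set h_nonempty, zero_add]
    exact (h ▸ h_nonempty : (A + B).Nonempty).of_add_left.eq_zero
  obtain ⟨c, ⟨hc₀, hc₁⟩, t, h_mem, h_min⟩ := exists_homothetic_vertices_of_add_eq_convexHull b h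
  refine ⟨c, hc₀, hc₁, t, Set.Subset.antisymm (fun x hx ↦ ?_) ?_⟩
  · rw [← sub_add_cancel x t]
    refine Set.add_mem_add (mem_smul_convexHull_of_coord_le b hc₀ fun i j hij ↦ ?_) rfl
    rw [← affineMap_add_le_add_iff_right _ t, sub_add_cancel]
    exact h_min x hx hij
  · exact smul_convexHull_add_singleton_subset hA (Set.forall_mem_range.2 h_mem)

end Simplex

theorem affineIndependent_standardTriangle :
    AffineIndependent ℝ (![![0, 0], ![1, 0], ![0, 1]] : Fin 3 → Fin 2 → ℝ) := by
  refine (affineIndependent_iff_of_fintype ..).2 fun w hw h ↦ ?_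
  rw [Finset.weightedVSub_eq_linear_combination _ hw] at h
  have h₁ : w 1 = 0 := by simpa [Fin.sum_univ_three] using congrFun h 0
  have h₂ : w 2 = 0 := by simpa [Fin.sum_univ_three] using congrFun h 1
  have h₀ : w 0 = 0 := by simpa [Fin.sum_univ_three, h₁, h₂] using hw
  simp [Fin.forall_fin_succ, h₀, h₁, h₂]

/-- The affine basis of the plane formed by the vertices of the standard triangle `Δ`. -/
noncomputable def standardTriangleBasis : AffineBasis (Fin 3) ℝ (Fin 2 → ℝ) where
  toFun := ![![0, 0], ![1, 0], ![0, 1]]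
  ind' := affineIndependent_standardTriangle
  tot' := affineIndependent_standardTriangle.affineSpan_eq_top_iff_card_eq_finrank_add_one.2
    (by simp)

theorem range_standardTriangleBasis :
    Set.range standardTriangleBasis = {![0, 0], ![1, 0], ![0, 1]} := by
  change Set.range ![![0, 0], ![1, 0], ![0, 1]] = _
  simp only [Matrix.range_cons, Matrix.range_empty, Set.union_empty, Set.singleton_union]

/-- The standard triangle `Δ = conv{(0,0), (1,0), (0,1)}` is indecomposable:
any Minkowski summand of `Δ` is a translate of a dilate `c·Δ` with `0 ≤ c ≤ 1`. -/
theorem standard_triangle_indecomposable (A B : Set (Fin 2 → ℝ))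
    (hA : A.Nonempty) (hB : B.Nonempty)
    (hAc : IsCompact A) (hBc : IsCompact B)
    (hAv : Convex ℝ A) (hBv : Convex ℝ B)
    (h : A + B = convexHull ℝ ({![0, 0], ![1, 0], ![0, 1]} : Set (Fin 2 → ℝ))) :
    ∃ c : ℝ, 0 ≤ c ∧ c ≤ 1 ∧ ∃ t : Fin 2 → ℝ,
      A = c • convexHull ℝ ({![0, 0], ![1, 0], ![0, 1]} : Set (Fin 2 → ℝ)) + {t} := by
  rw [← range_standardTriangleBasis] at h ⊢
  exact standard_triangle_indecomposable_general standardTriangleBasis hAv h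
end

section
/- Let n ≥ 1 and let f : ℝⁿ → ℝ be a convex function. Suppose there are finitely many affine functions g₁, …, g_k : ℝⁿ → ℝ such that for every x ∈ ℝⁿ there is some i with f(x) = gᵢ(x). Let J = {i : gᵢ(y) ≤ f(y) for all y ∈ ℝⁿ}. Then J is nonempty and f(x) = max_{i ∈ J} gᵢ(x) for every x ∈ ℝⁿ. -/
/-!
The closed sets `{f = gᵢ}` are finitely many and cover a finite-dimensional space, so every point
is a limit of interior points of one of them. At an interior point the convex function `f - gᵢ`
vanishes locally, so it has a local, hence global, minimum there, and `gᵢ` is a minorant of `f`.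
For each `gᵢ` that is not a minorant, pick a point witnessing this: in an arbitrary vector space,
these finitely many points and the given point `x` span a finite-dimensional subspace, to which `f`
and the `gᵢ` can be restricted, and a `gᵢ` that is a minorant there is a minorant everywhere.
-/

open Set Topology

lemma le_of_convexOn_of_concaveOn_of_eventuallyLE {E : Type*} [AddCommGroup E]
    [TopologicalSpace E] [Module ℝ E] [IsTopologicalAddGroup E] [ContinuousSMul ℝ E]
    {s : Set E} {f g : E → ℝ} (hf : ConvexOn ℝ s f) (hg : ConcaveOn ℝ s g) {x : E} (hx : x ∈ s)
    (hgf : g ≤ᶠ[𝓝[s] x] f) (hfg : f x = g x) {y : E} (hy : y ∈ s) : g y ≤ f y := by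
  have hlocal : IsLocalMinOn (f - g) s x := by
    filter_upwards [hgf] with z hz
    simpa only [Pi.sub_apply, hfg, sub_self, sub_nonneg] using hz
  have hglobal : (f - g) x ≤ (f - g) y :=
    IsMinOn.of_isLocalMinOn_of_convexOn hx hlocal (hf.sub hg) hy
  simpa only [Pi.sub_apply, hfg, sub_self, sub_nonneg] using hglobal

lemma exists_mem_closure_interior_of_iUnion_eq_univ {X ι : Type*} [TopologicalSpace X]
    [BaireSpace X] [Finite ι] {F : ι → Set X} (hclosed : ∀ i, IsClosed (F i))
    (hcover : ⋃ i, F i = univ) (x : X) : ∃ i, x ∈ closure (interior (F i)) := by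
  have hx : x ∈ closure (⋃ i, interior (F i)) := dense_iUnion_interior_of_closed hclosed hcover x
  rwa [closure_iUnion_of_finite, mem_iUnion] at hx

section PiecewiseConcave

variable {E ι : Type*} [Finite ι] {f : E → ℝ} {g : ι → E → ℝ}

lemma exists_eq_and_forall_le_of_finiteDimensional [NormedAddCommGroup E] [NormedSpace ℝ E]
    [FiniteDimensional ℝ E] (hf : ConvexOn ℝ univ f) (hg : ∀ i, ConcaveOn ℝ univ (g i))
    (hcover : ∀ x, ∃ i, f x = g i x) (x : E) : ∃ i, f x = g i x ∧ ∀ y, g i y ≤ f y := by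
  have : CompleteSpace E := FiniteDimensional.complete ℝ E
  have hclosed (i : ι) : IsClosed {z | f z = g i z} :=
    isClosed_eq hf.locallyLipschitz.continuous (hg i).locallyLipschitz.continuous
  obtain ⟨i, hi⟩ :=
    exists_mem_closure_interior_of_iUnion_eq_univ hclosed (iUnion_eq_univ_iff.2 hcover) x
  obtain ⟨z, hz⟩ : (interior {z | f z = g i z}).Nonempty := closure_nonempty_iff.1 ⟨x, hi⟩
  have heq : f =ᶠ[𝓝 z] g i := mem_interior_iff_mem_nhds.1 hz
  have hge : g i ≤ᶠ[𝓝[univ] z] f := heq.symm.le.filter_mono nhdsWithin_le_nhds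
  exact ⟨i, closure_minimal interior_subset (hclosed i) hi, fun y =>
    le_of_convexOn_of_concaveOn_of_eventuallyLE hf (hg i) (mem_univ z) hge heq.eq_of_nhds
      (mem_univ y)⟩

variable [AddCommGroup E] [Module ℝ E]

lemma exists_eq_and_forall_le (hf : ConvexOn ℝ univ f) (hg : ∀ i, ConcaveOn ℝ univ (g i))
    (hcover : ∀ x, ∃ i, f x = g i x) (x : E) : ∃ i, f x = g i x ∧ ∀ y, g i y ≤ f y := by
  classical
  have := Fintype.ofFinite ι
  have hwitness (i : ι) : ∃ y, g i y ≤ f y → ∀ z, g i z ≤ f z := by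
    by_contra! h
    obtain ⟨-, z, hz⟩ := h x
    exact hz.not_ge (h z).1
  choose y hy using hwitness
  let L : (Option ι → ℝ) →ₗ[ℝ] E := Fintype.linearCombination ℝ fun o => o.elim x y
  have hLx : L (Pi.single none 1) = x := by simp [L]
  have hLy (i : ι) : L (Pi.single (some i) 1) = y i := by simp [L]
  obtain ⟨i, heq, hle⟩ := exists_eq_and_forall_le_of_finiteDimensional
    (hf.comp_linearMap L) (fun i => (hg i).comp_linearMap L) (fun t => hcover (L t))
    (Pi.single none 1)
  simp only [Function.comp_apply, hLx] at heq hle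
  have hyi : g i (y i) ≤ f (y i) := hLy i ▸ hle (Pi.single (some i) 1)
  exact ⟨i, heq, hy i hyi⟩

theorem convex_piecewise_affine_is_max_general (hf : ConvexOn ℝ univ f)
    (hg : ∀ i, ConcaveOn ℝ univ (g i)) (hcover : ∀ x, ∃ i, f x = g i x)
    (J : Finset ι) (hJ : ∀ i, i ∈ J ↔ ∀ y, g i y ≤ f y) :
    ∃ hJne : J.Nonempty, ∀ x, f x = J.sup' hJne (fun i => g i x) := by
  have hattained (x : E) : ∃ i ∈ J, f x = g i x := by
    obtain ⟨i, heq, hle⟩ := exists_eq_and_forall_le hf hg hcover x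
    exact ⟨i, (hJ i).2 hle, heq⟩
  obtain ⟨i₀, hi₀, -⟩ := hattained 0
  refine ⟨⟨i₀, hi₀⟩, fun x => le_antisymm ?_ (Finset.sup'_le _ _ fun i hi => (hJ i).1 hi x)⟩
  obtain ⟨i, hi, heq⟩ := hattained x
  exact heq.trans_le (Finset.le_sup' (fun i => g i x) hi)

end PiecewiseConcave

lemma concaveOn_const_add_sum_mul {𝕜 ι : Type*} [CommSemiring 𝕜] [PartialOrder 𝕜]
    [IsOrderedRing 𝕜] [Fintype ι] {s : Set (ι → 𝕜)} (hs : Convex 𝕜 s) (a : ι → 𝕜) (c : 𝕜) :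
    ConcaveOn 𝕜 s fun x => c + ∑ j, a j * x j := by
  have hlin : (fun x : ι → 𝕜 => c + ∑ j, a j * x j) =
      ⇑(Fintype.linearCombination 𝕜 a) + fun _ => c := by
    ext x
    simp [Fintype.linearCombination_apply, mul_comm, add_comm]
  rw [hlin]
  exact ((Fintype.linearCombination 𝕜 a).concaveOn hs).add_const c

/-- A convex function `f : ℝⁿ → ℝ` which is pointwise equal to one of
finitely many affine functions `g₁, …, g_k` is the pointwise maximum of those affine
pieces lying below `f` everywhere; in particular this collection is nonempty. -/
theorem convex_piecewise_affine_is_max (n : ℕ) (hn : 1 ≤ n)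
    (f : (Fin n → ℝ) → ℝ) (hf : ConvexOn ℝ Set.univ f)
    (k : ℕ) (g : Fin k → (Fin n → ℝ) → ℝ)
    (haff : ∀ i, ∃ (a : Fin n → ℝ) (c : ℝ), ∀ x, g i x = c + ∑ j, a j * x j)
    (hcover : ∀ x, ∃ i, f x = g i x)
    (J : Finset (Fin k)) (hJ : ∀ i, i ∈ J ↔ ∀ y, g i y ≤ f y) :
    ∃ hJne : J.Nonempty, ∀ x, f x = J.sup' hJne (fun i => g i x) := by
  choose a c hac using haff
  exact convex_piecewise_affine_is_max_general hf
    (fun i => funext (hac i) ▸ concaveOn_const_add_sum_mul convex_univ (a i) (c i)) hcover J hJ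
end
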